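/- arXiv:1901.04241 — 10 statements merged into one kernel-verified Lean document; each statement's English description precedes it below -/
import Mathlib

section
/- Let n ≥ 1, let ω be a primitive n-th root of unity in a field F, and let e_0, …, e_{n−1} ∈ F^n be the rows of the Fourier matrix. Let r, k, a be integers with 1 ≤ r ≤ n and gcd(k, n) = 1, and let C be the F-linear span of the r rows e_{(a + i·k) mod n}, i = 0, 1, …, r−1. Then dim_F C = r and every nonzero element of C has Hamming weight at least n − r + 1; that is, C is an (n, r, n−r+1) MDS code. -/
/-- Hamming weight of a vector: the number of nonzero coordinates. -/
noncomputable def hWeight {F : Type*} [Field F] {n : ℕ} (v : Fin n → F) : ℕ :=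
  open scoped Classical in
  (Finset.univ.filter fun m => v m ≠ 0).card

/-- The `i`-th row of the Fourier matrix built from `ω`: `(e_i)_m = ω^(i·m)`. -/
def fourierRow {F : Type*} [Field F] (n : ℕ) (ω : F) (i : ZMod n) : Fin n → F :=
  fun m => ω ^ (i.val * m.val)

theorem mds_key {F : Type*} [Field F] (n : ℕ) [NeZero n] (ω : F)
    (hω : IsPrimitiveRoot ω n)
    (r : ℕ) (hrn : r ≤ n) (k a : ℤ) (hk : Int.gcd k n = 1) (c : Fin r → F) (hc : c ≠ 0) :
    n - r + 1 ≤ hWeight (∑ i : Fin r, c i •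
      fourierRow n ω ((a : ZMod n) + ((i : ℕ) : ZMod n) * ((k : ZMod n)))) := by
  classical
  set A := (a : ZMod n).val with hA
  set K := (k : ZMod n).val with hK
  have hKc : Nat.Coprime K n := by
    have hu : IsUnit ((k : ZMod n)) := by
      rw [ZMod.coe_int_isUnit_iff_isCoprime]
      exact (Int.isCoprime_iff_gcd_eq_one.mpr hk).symm
    have h2 : IsUnit ((K : ℕ) : ZMod n) := by
      rw [hK, ZMod.natCast_zmod_val]; exact hu
    exact (ZMod.isUnit_iff_coprime K n).mp h2
  have hωK : IsPrimitiveRoot (ω ^ K) n := hω.pow_of_coprime K hKc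
  have hω0 : ω ≠ 0 := hω.ne_zero (NeZero.ne n)
  have hrow : ∀ (i : Fin r) (m : Fin n),
      fourierRow n ω ((a : ZMod n) + ((i : ℕ) : ZMod n) * ((k : ZMod n))) m
        = ω ^ (A * m.val) * ((ω ^ K) ^ m.val) ^ (i : ℕ) := by
    intro i m
    have h1 : ((a : ZMod n) + ((i : ℕ) : ZMod n) * ((k : ZMod n))).val ≡ A + i * K [MOD n] := by
      rw [← ZMod.natCast_eq_natCast_iff]
      simp [hA, hK]
    have h2 : ω ^ ((a : ZMod n) + ((i : ℕ) : ZMod n) * ((k : ZMod n))).val = ω ^ (A + i * K) := by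
      apply pow_eq_pow_of_modEq h1 hω.pow_eq_one
    simp only [fourierRow]
    rw [pow_mul, h2]
    ring
  set p : Polynomial F := ∑ i : Fin r, Polynomial.C (c i) * Polynomial.X ^ (i : ℕ) with hp
  have hdeg : p.degree < r := Polynomial.degree_sum_fin_lt c
  have hp0 : p ≠ 0 := by
    intro h0
    apply hc
    funext i
    have : p.coeff (i : ℕ) = 0 := by rw [h0]; simp
    rw [hp, Polynomial.finset_sum_coeff] at this
    simpa [Polynomial.coeff_C_mul, Polynomial.coeff_X_pow, Fin.val_inj] using this
  set v := ∑ i : Fin r, c i •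
      fourierRow n ω ((a : ZMod n) + ((i : ℕ) : ZMod n) * ((k : ZMod n))) with hv
  have hvm : ∀ m, v m = ω ^ (A * m.val) * p.eval ((ω ^ K) ^ m.val) := by
    intro m
    simp only [hv, hp, Finset.sum_apply, Pi.smul_apply, smul_eq_mul, hrow,
      Polynomial.eval_finset_sum, Finset.mul_sum, Polynomial.eval_mul, Polynomial.eval_C,
      Polynomial.eval_pow, Polynomial.eval_X]
    refine Finset.sum_congr rfl fun i _ => by ring
  have hz : (Finset.univ.filter fun m => v m = 0).card < r := by
    by_contra! hcon
    apply hp0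
    have hinj : Set.InjOn (fun m : Fin n => (ω ^ K) ^ m.val)
        (Finset.univ.filter fun m => v m = 0) := by
      intro x _ y _ hxy
      exact Fin.ext (hωK.pow_inj x.2 y.2 hxy)
    refine Polynomial.eq_zero_of_degree_lt_of_eval_index_eq_zero
      (s := Finset.univ.filter fun m => v m = 0) (v := fun m : Fin n => (ω ^ K) ^ m.val) hinj
      (hdeg.trans_le (Nat.cast_le.mpr hcon)) ?_
    intro m hm
    have := (Finset.mem_filter.mp hm).2
    rw [hvm] at this
    exact (mul_eq_zero.mp this).resolve_left (pow_ne_zero _ hω0)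
  have hsum := Finset.card_filter_add_card_filter_not (s := (Finset.univ : Finset (Fin n)))
    (fun m => v m = 0)
  have hw : hWeight v = (Finset.univ.filter fun m => ¬ v m = 0).card := by
    unfold hWeight
    congr!
  rw [Finset.card_univ, Fintype.card_fin] at hsum
  omega

/-- The span of `r` rows of the Fourier matrix in arithmetic sequence
`e_{(a + i·k) mod n}`, `i = 0, …, r−1`, with `gcd(k, n) = 1`, has dimension `r` and every
nonzero element has Hamming weight at least `n − r + 1`: it is an `(n, r, n−r+1)` MDS code. -/
theorem span_arith_rows_MDS {F : Type*} [Field F] (n : ℕ) [NeZero n] (ω : F)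
    (hω1 : ω ^ n = 1) (hωprim : ∀ i : ℕ, 1 ≤ i → i < n → ω ^ i ≠ 1)
    (r : ℕ) (hr1 : 1 ≤ r) (hrn : r ≤ n) (k a : ℤ) (hk : Int.gcd k n = 1)
    (C : Submodule F (Fin n → F))
    (hC : C = Submodule.span F (Set.range fun i : Fin r =>
      fourierRow n ω ((a : ZMod n) + ((i : ℕ) : ZMod n) * ((k : ZMod n))))) :
    Module.finrank F C = r ∧ ∀ v ∈ C, v ≠ 0 → n - r + 1 ≤ hWeight v := by
  subst hC
  have hω : IsPrimitiveRoot ω n :=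
    IsPrimitiveRoot.mk_of_lt ω (Nat.pos_of_ne_zero (NeZero.ne n)) hω1 (fun i h1 h2 => hωprim i h1 h2)
  have key := mds_key n ω hω r hrn k a hk
  constructor
  · rw [finrank_span_eq_card, Fintype.card_fin]
    rw [Fintype.linearIndependent_iff]
    intro c h0
    by_contra hne
    have hc : c ≠ 0 := fun h => hne (by simp [h])
    have := key c hc
    rw [h0] at this
    simp [hWeight] at this
  · intro v hv hv0
    obtain ⟨c, rfl⟩ := (Submodule.mem_span_range_iff_exists_fun F).mp hv
    exact key c (by rintro rfl; simp at hv0)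
end

section
/- Let n ≥ 1, let ω be a primitive n-th root of unity in a field F, and let e_0, …, e_{n−1} ∈ F^n be the rows of the Fourier matrix. Let a and r be integers with 1 ≤ r ≤ n, and let C be the F-linear span of the r consecutive rows e_{a mod n}, e_{(a+1) mod n}, …, e_{(a+r−1) mod n} (wrap-around of indices permitted). Then dim_F C = r and every nonzero element of C has Hamming weight at least n − r + 1; that is, C is an (n, r, n−r+1) MDS code. -/
theorem aux_row {F : Type*} [Field F] (n : ℕ) [NeZero n] (ω : F) (hω1 : ω ^ n = 1)
    (A : ZMod n) (i : ℕ) (m : Fin n) :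
    fourierRow n ω (A + (i : ZMod n)) m = ω ^ (A.val * m.val) * (ω ^ m.val) ^ i := by
  have hmod : ∀ x : ℕ, ω ^ (x % n) = ω ^ x := by
    intro x
    conv_rhs => rw [← Nat.div_add_mod x n, pow_add, pow_mul, hω1, one_pow, one_mul]
  unfold fourierRow
  rw [pow_mul, ZMod.val_add, hmod, ZMod.val_natCast, pow_add, hmod, ← pow_add, ← pow_mul,
    ← pow_mul, ← pow_add]
  congr 1
  ring

theorem aux_inj {F : Type*} [Field F] (n : ℕ) [NeZero n] (ω : F)
    (hω1 : ω ^ n = 1) (hωprim : ∀ i : ℕ, 1 ≤ i → i < n → ω ^ i ≠ 1) :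
    Function.Injective (fun m : Fin n => ω ^ m.val) := by
  have hp : IsPrimitiveRoot ω n := by
    rw [IsPrimitiveRoot.iff (Nat.pos_of_ne_zero (NeZero.ne n))]
    exact ⟨hω1, fun i h0 hi => hωprim i h0 hi⟩
  intro x y hxy
  exact Fin.ext (hp.pow_inj x.2 y.2 hxy)

theorem aux_key {F : Type*} [Field F] (n : ℕ) [NeZero n] (ω : F)
    (hω1 : ω ^ n = 1) (hωprim : ∀ i : ℕ, 1 ≤ i → i < n → ω ^ i ≠ 1)
    (r : ℕ) (A : ZMod n) (c : Fin r → F) (S : Finset (Fin n)) (hS : r ≤ S.card)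
    (h : ∀ m ∈ S, (∑ i : Fin r, c i • fourierRow n ω (A + ((i : ℕ) : ZMod n))) m = 0) :
    c = 0 := by
  have hω0 : ω ≠ 0 := by
    rintro rfl
    rw [zero_pow (NeZero.ne n)] at hω1
    exact zero_ne_one hω1
  let e := S.orderEmbOfCardLe hS
  have he : ∀ j, e j ∈ S := fun j => S.orderEmbOfCardLe_mem hS j
  refine Matrix.eq_zero_of_forall_index_sum_pow_mul_eq_zero
    (f := fun j => ω ^ (e j).val) ?_ ?_
  · exact (aux_inj n ω hω1 hωprim).comp e.injective
  · intro j
    have h1 := h _ (he j)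
    simp only [Finset.sum_apply, Pi.smul_apply, smul_eq_mul, aux_row n ω hω1] at h1
    have h2 : ω ^ (A.val * (e j).val) * ∑ i : Fin r, (ω ^ (e j).val) ^ (i : ℕ) * c i = 0 := by
      rw [← h1, Finset.mul_sum]
      exact Finset.sum_congr rfl fun i _ => by ring
    exact (mul_eq_zero.mp h2).resolve_left (pow_ne_zero _ hω0)

/-- The span of `r` consecutive rows of the Fourier matrix
`e_{(a+i) mod n}`, `i = 0, …, r−1` (wrap-around permitted), has dimension `r` and every
nonzero element has Hamming weight at least `n − r + 1`: it is an `(n, r, n−r+1)` MDS code. -/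
theorem span_consecutive_rows_MDS {F : Type*} [Field F] (n : ℕ) [NeZero n] (ω : F)
    (hω1 : ω ^ n = 1) (hωprim : ∀ i : ℕ, 1 ≤ i → i < n → ω ^ i ≠ 1)
    (r : ℕ) (hr1 : 1 ≤ r) (hrn : r ≤ n) (a : ℤ)
    (C : Submodule F (Fin n → F))
    (hC : C = Submodule.span F (Set.range fun i : Fin r =>
      fourierRow n ω ((a : ZMod n) + ((i : ℕ) : ZMod n)))) :
    Module.finrank F C = r ∧ ∀ v ∈ C, v ≠ 0 → n - r + 1 ≤ hWeight v := by
  classical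
  subst hC
  constructor
  · rw [finrank_span_eq_card, Fintype.card_fin]
    rw [Fintype.linearIndependent_iff]
    intro g hg i
    have := aux_key n ω hω1 hωprim r (a : ZMod n) g Finset.univ (by simpa using hrn)
      (fun m _ => by rw [hg]; rfl)
    rw [this]; rfl
  · intro v hv hv0
    rw [Submodule.mem_span_range_iff_exists_fun] at hv
    obtain ⟨c, hc⟩ := hv
    by_contra hlt
    apply hv0
    have hcard := Finset.card_filter_add_card_filter_not (s := (Finset.univ : Finset (Fin n)))
      (fun m => v m ≠ 0)
    have hw : hWeight v = (Finset.univ.filter fun m => v m ≠ 0).card := by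
      unfold hWeight; congr
    rw [Finset.card_univ, Fintype.card_fin] at hcard
    have := aux_key n ω hω1 hωprim r (a : ZMod n) c (Finset.univ.filter fun m => ¬ v m ≠ 0)
      (by omega) (fun m hm => by rw [hc]; simpa using hm)
    rw [← hc, this]; simp
end

section
/- Let n ≥ 1, let ω be a primitive n-th root of unity in a field F, and let e_0, …, e_{n−1} ∈ F^n be the rows of the Fourier matrix. For any subset S ⊆ {0, 1, …, n−1}, let C be the F-linear span of {e_i : i ∈ S}. Then the dual code C^⊥ with respect to the standard bilinear form equals the F-linear span of {e_j : 0 ≤ j ≤ n−1 and (n − j) mod n ∉ S}. -/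
/-- The dual code of `C` with respect to the standard bilinear form. -/
def dualCode {F : Type*} [Field F] {n : ℕ} (C : Submodule F (Fin n → F)) :
    Submodule F (Fin n → F) where
  carrier := {v | ∀ u ∈ C, ∑ m, u m * v m = 0}
  add_mem' := by
    intro a b ha hb u hu
    have h : ∑ m, u m * (a + b) m = (∑ m, u m * a m) + ∑ m, u m * b m := by
      rw [← Finset.sum_add_distrib]
      exact Finset.sum_congr rfl fun m _ => by simp [mul_add]
    rw [h, ha u hu, hb u hu, add_zero]
  zero_mem' := by intro u hu; simp
  smul_mem' := by
    intro c a ha u hu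
    have h : ∑ m, u m * (c • a) m = c * ∑ m, u m * a m := by
      rw [Finset.mul_sum]
      exact Finset.sum_congr rfl fun m _ => by simp [smul_eq_mul]; ring
    rw [h, ha u hu, mul_zero]

theorem fr_pair {F : Type*} [Field F] (n : ℕ) [NeZero n] (ω : F) (h : IsPrimitiveRoot ω n)
    (i j : ZMod n) :
    ∑ m, fourierRow n ω i m * fourierRow n ω j m = if j = -i then (n : F) else 0 := by
  have e : ∑ m, fourierRow n ω i m * fourierRow n ω j m
      = ∑ m ∈ Finset.range n, (ω ^ (i.val + j.val)) ^ m := by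
    rw [← Fin.sum_univ_eq_sum_range (fun m => (ω ^ (i.val + j.val)) ^ m)]
    refine Finset.sum_congr rfl fun m _ => ?_
    simp only [fourierRow]
    rw [← pow_add, ← pow_mul, add_mul]
  have key : j = -i ↔ ω ^ (i.val + j.val) = 1 := by
    rw [h.pow_eq_one_iff_dvd, ← ZMod.natCast_eq_zero_iff]
    simp only [Nat.cast_add, ZMod.natCast_val, ZMod.cast_id', id]
    rw [eq_neg_iff_add_eq_zero, add_comm]
  rw [e]
  split_ifs with hj
  · rw [key.1 hj]; simp
  · have h1 : ω ^ (i.val + j.val) - 1 ≠ 0 := sub_ne_zero.2 (fun h => hj (key.2 h))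
    have h2 := mul_geom_sum (ω ^ (i.val + j.val)) n
    rw [← pow_mul, mul_comm _ n, pow_mul, h.pow_eq_one, one_pow, sub_self] at h2
    exact (mul_eq_zero.1 h2).resolve_left h1

theorem fr_coef {F : Type*} [Field F] (n : ℕ) [NeZero n] (ω : F) (h : IsPrimitiveRoot ω n)
    (c : ZMod n → F) (i : ZMod n) :
    ∑ m, fourierRow n ω i m * (∑ j, c j • fourierRow n ω j) m = c (-i) * n := by
  simp only [Finset.sum_apply, Pi.smul_apply, smul_eq_mul, Finset.mul_sum]
  rw [Finset.sum_comm]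
  have : ∀ j, ∑ m, fourierRow n ω i m * (c j * fourierRow n ω j m)
      = c j * if j = -i then (n : F) else 0 := by
    intro j
    rw [← fr_pair n ω h, Finset.mul_sum]
    exact Finset.sum_congr rfl fun m _ => by ring
  simp [this]

/-- For any subset `S` of row indices, the dual (w.r.t. the standard
bilinear form) of the span of `{e_i : i ∈ S}` is the span of `{e_j : (n − j) mod n ∉ S}`. -/
theorem dual_of_span_fourierRows {F : Type*} [Field F] (n : ℕ) [NeZero n] (ω : F)
    (hω1 : ω ^ n = 1) (hωprim : ∀ i : ℕ, 1 ≤ i → i < n → ω ^ i ≠ 1)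
    (S : Set (ZMod n)) :
    dualCode (Submodule.span F (fourierRow n ω '' S)) =
      Submodule.span F (fourierRow n ω '' {j : ZMod n | -j ∉ S}) := by
  have h : IsPrimitiveRoot ω n :=
    IsPrimitiveRoot.mk_of_lt ω (NeZero.pos n) hω1 (fun l h0 hl => hωprim l h0 hl)
  have hn : (n : F) ≠ 0 := h.neZero'.out
  have hli : LinearIndependent F (fourierRow n ω) := by
    rw [Fintype.linearIndependent_iff]
    intro g hg i
    have := fr_coef n ω h g (-i)
    rw [hg, neg_neg] at this
    simpa [hn] using this.symm
  have hsp : Submodule.span F (Set.range (fourierRow n ω)) = ⊤ :=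
    hli.span_eq_top_of_card_eq_finrank' (by simp [ZMod.card])
  apply le_antisymm
  · intro v hv
    have hv' : v ∈ Submodule.span F (Set.range (fourierRow n ω)) := hsp ▸ Submodule.mem_top
    obtain ⟨c, rfl⟩ := (Submodule.mem_span_range_iff_exists_fun F).1 hv'
    refine Submodule.sum_mem _ fun j _ => ?_
    by_cases hj : -j ∈ S
    · have h1 := hv _ (Submodule.subset_span (Set.mem_image_of_mem _ hj))
      rw [fr_coef n ω h, neg_neg] at h1
      rw [(mul_eq_zero.1 h1).resolve_right hn, zero_smul]
      exact Submodule.zero_mem _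
    · exact Submodule.smul_mem _ _ (Submodule.subset_span (Set.mem_image_of_mem _ hj))
  · rw [Submodule.span_le]
    rintro _ ⟨j, hj, rfl⟩ u hu
    induction hu using Submodule.span_induction with
    | mem x hx =>
      obtain ⟨i, hi, rfl⟩ := hx
      rw [fr_pair n ω h, if_neg]
      rintro rfl
      exact hj (by simpa using hi)
    | zero => simp
    | add x y _ _ hx hy => simp [add_mul, Finset.sum_add_distrib, hx, hy]
    | smul a x _ hx => simp [mul_assoc, ← Finset.mul_sum, hx]
end

section
/- Let n ≥ 1, let ω be a primitive n-th root of unity in a field F, and let e_0, …, e_{n−1} ∈ F^n be the rows of the Fourier matrix. Suppose S ⊆ {0, 1, …, n−1} satisfies: i ∈ S implies (n − i) mod n ∈ S. Then the code C spanned by {e_i : i ∈ S} satisfies C ∩ C^⊥ = {0}; that is, C is a linear complementary dual (LCD) code. -/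
theorem fourierRow_orth {F : Type*} [Field F] (n : ℕ) [NeZero n] (ω : F)
    (h : IsPrimitiveRoot ω n) (i j : ZMod n) :
    ∑ m, fourierRow n ω i m * fourierRow n ω j m = if i + j = 0 then (n : F) else 0 := by
  have e : ∑ m, fourierRow n ω i m * fourierRow n ω j m
      = ∑ m ∈ Finset.range n, (ω ^ (i.val + j.val)) ^ m := by
    rw [← Fin.sum_univ_eq_sum_range (fun m => (ω ^ (i.val + j.val)) ^ m) n]
    refine Finset.sum_congr rfl fun m _ => ?_
    simp only [fourierRow]
    rw [← pow_add, ← pow_mul, add_mul]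
  have k : ω ^ (i.val + j.val) = 1 ↔ i + j = 0 := by
    rw [h.pow_eq_one_iff_dvd, ← ZMod.natCast_eq_zero_iff]
    simp
  rw [e]
  split_ifs with hij
  · rw [k.2 hij]; simp
  · have h1 : ω ^ (i.val + j.val) - 1 ≠ 0 := sub_ne_zero.2 fun hh => hij (k.1 hh)
    have h2 := mul_geom_sum (ω ^ (i.val + j.val)) n
    rw [← pow_mul, mul_comm _ n, pow_mul, h.pow_eq_one, one_pow, sub_self] at h2
    exact (mul_eq_zero.1 h2).resolve_left h1

/-- If the index set `S` is closed under `i ↦ (n − i) mod n`, then the code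
spanned by `{e_i : i ∈ S}` satisfies `C ∩ C^⊥ = {0}`: it is a linear complementary dual code. -/
theorem span_symmetric_rows_LCD {F : Type*} [Field F] (n : ℕ) [NeZero n] (ω : F)
    (hω1 : ω ^ n = 1) (hωprim : ∀ i : ℕ, 1 ≤ i → i < n → ω ^ i ≠ 1)
    (S : Set (ZMod n)) (hS : ∀ i ∈ S, -i ∈ S) :
    Submodule.span F (fourierRow n ω '' S) ⊓
      dualCode (Submodule.span F (fourierRow n ω '' S)) = ⊥ := by
  classical
  have hn : 0 < n := Nat.pos_of_ne_zero (NeZero.ne n)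
  have h : IsPrimitiveRoot ω n :=
    IsPrimitiveRoot.mk_of_lt ω hn hω1 fun l h0 h1 => hωprim l h0 h1
  have hnF : (n : F) ≠ 0 := (h.neZero').ne
  have key : ∀ v ∈ Submodule.span F (fourierRow n ω '' S),
      (n : F) • v = ∑ j : ZMod n, if j ∈ S then
        (∑ m, fourierRow n ω (-j) m * v m) • fourierRow n ω j else 0 := by
    intro v hv
    induction hv using Submodule.span_induction with
    | mem x hx =>
      obtain ⟨i, hi, rfl⟩ := hx
      rw [Finset.sum_eq_single i]
      · rw [if_pos hi, fourierRow_orth n ω h, if_pos (by simp)]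
      · intro j _ hj
        have hh : ¬ (-j + i = 0) := fun hh => hj (neg_add_eq_zero.1 hh)
        rw [fourierRow_orth n ω h, if_neg hh]
        simp
      · simp
    | zero => simp
    | add x y _ _ hx hy =>
      rw [smul_add, hx, hy, ← Finset.sum_add_distrib]
      refine Finset.sum_congr rfl fun j _ => ?_
      split_ifs
      · rw [← add_smul, ← Finset.sum_add_distrib]
        simp [mul_add]
      · simp
    | smul a x _ hx =>
      rw [smul_comm, hx, Finset.smul_sum]
      refine Finset.sum_congr rfl fun j _ => ?_
      split_ifs
      · rw [smul_smul, Finset.mul_sum]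
        simp [mul_left_comm]
      · simp
  rw [eq_bot_iff]
  rintro v ⟨hv, hd⟩
  have h0 := key v hv
  rw [Finset.sum_eq_zero] at h0
  · exact (smul_eq_zero.1 h0).resolve_left hnF
  · intro j _
    split_ifs with hj
    · have h3 : ∑ m, fourierRow n ω (-j) m * v m = 0 :=
        hd _ (Submodule.subset_span ⟨-j, hS j hj, rfl⟩)
      rw [h3, zero_smul]
    · rfl
end

section
/- Let n ≥ 1, let ω be a primitive n-th root of unity in a field F, and let e_0, …, e_{n−1} ∈ F^n be the rows of the Fourier matrix. Let r ≥ 0 be an integer with 2r + 1 ≤ n, and let C be the F-linear span of the 2r+1 rows e_0, e_1, …, e_r, e_{n−r}, e_{n−r+1}, …, e_{n−1} (for r = 0 take C = span{e_0}). Then C is an LCD MDS code of length n, dimension 2r+1, and minimum distance n − 2r. -/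
/-- Minimum distance of a code: the least Hamming weight of a nonzero codeword. -/
noncomputable def minDist {F : Type*} [Field F] {n : ℕ} (C : Submodule F (Fin n → F)) : ℕ :=
  sInf {d | ∃ v ∈ C, v ≠ 0 ∧ hWeight v = d}

open Polynomial in
/-- Evaluation map describing the code. -/
noncomputable def evT {F : Type*} [Field F] (n : ℕ) (ω : F) (r : ℕ) : F[X] →ₗ[F] (Fin n → F) where
  toFun p := fun m => ω ^ ((n - r) * m.val) * p.eval (ω ^ m.val)
  map_add' p q := by ext m; simp [mul_add]
  map_smul' c p := by ext m; simp; ring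

theorem geom_zero {F : Type*} [Field F] (n : ℕ) (ω : F) (h : IsPrimitiveRoot ω n)
    (s : ℕ) (hs : ¬ n ∣ s) : ∑ m : Fin n, ω ^ (s * m.val) = 0 := by
  have hx : ω ^ s ≠ 1 := fun hh => hs ((h.pow_eq_one_iff_dvd s).1 hh)
  have h1 := mul_geom_sum (ω ^ s) n
  rw [← pow_mul, mul_comm s n, pow_mul, h.pow_eq_one, one_pow, sub_self] at h1
  have h2 := (mul_eq_zero.1 h1).resolve_left (sub_ne_zero.2 hx)
  rw [Fin.sum_univ_eq_sum_range (fun m => ω ^ (s * m)) n]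
  simpa [pow_mul] using h2

open Polynomial in
theorem C_eq_map {F : Type*} [Field F] (n : ℕ) [NeZero n] (ω : F)
    (h : IsPrimitiveRoot ω n) (r : ℕ) (hr : 2 * r + 1 ≤ n) :
    Submodule.span F (fourierRow n ω '' {i : ZMod n | i.val ≤ r ∨ n - r ≤ i.val})
      = (degreeLT F (2 * r + 1)).map (evT n ω r) := by
  have key : ∀ k i : ℕ, ω ^ (n - r + k) = ω ^ i → 
      evT n ω r (X ^ k) = fun m : Fin n => ω ^ (i * m.val) := by
    intro k i hk
    ext m
    simp only [evT, LinearMap.coe_mk, AddHom.coe_mk, eval_pow, eval_X]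
    rw [pow_mul ω i, ← hk, ← pow_mul, ← pow_mul, ← pow_add]
    ring_nf
  have hp : ∀ a, ω ^ (n + a) = ω ^ a := fun a => by rw [pow_add, h.pow_eq_one, one_mul]
  apply le_antisymm
  · rw [Submodule.span_le]
    rintro _ ⟨i, hi, rfl⟩
    have hlt := ZMod.val_lt i
    simp only [Set.mem_ofPred_eq] at hi
    rcases hi with hi | hi
    · refine ⟨X ^ (i.val + r), ?_, ?_⟩
      · rw [SetLike.mem_coe, mem_degreeLT, degree_X_pow]; exact_mod_cast (by omega)
      · rw [key _ i.val]; rfl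
        rw [← hp i.val]; congr 1; omega
    · refine ⟨X ^ (i.val - (n - r)), ?_, ?_⟩
      · rw [SetLike.mem_coe, mem_degreeLT, degree_X_pow]; exact_mod_cast (by omega)
      · rw [key _ i.val]; rfl
        congr 1; omega
  · classical
    rw [degreeLT_eq_span_X_pow, Submodule.map_span, Submodule.span_le]
    rintro _ ⟨_, hk, rfl⟩
    simp only [Finset.coe_image, Set.mem_image, Finset.mem_coe, Finset.mem_range] at hk
    obtain ⟨k, hk, rfl⟩ := hk
    apply Submodule.subset_span
    by_cases hkr : k < r
    · have hv : ((n - r + k : ℕ) : ZMod n).val = n - r + k := ZMod.val_cast_of_lt (by omega)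
      refine ⟨((n - r + k : ℕ) : ZMod n), ?_, ?_⟩
      · simp only [Set.mem_ofPred_eq, hv]; omega
      · rw [key k _ rfl]; unfold fourierRow; rw [hv]
    · have hv : ((k - r : ℕ) : ZMod n).val = k - r := ZMod.val_cast_of_lt (by omega)
      refine ⟨((k - r : ℕ) : ZMod n), ?_, ?_⟩
      · simp only [Set.mem_ofPred_eq, hv]; omega
      · rw [key k (k - r)]
        · unfold fourierRow; rw [hv]
        · rw [← hp (k - r)]; congr 1; omega

theorem hWeight_add {F : Type*} [Field F] {n : ℕ} (v : Fin n → F) :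
    ∃ Z : Finset (Fin n), (∀ m, m ∈ Z ↔ v m = 0) ∧ Z.card + hWeight v = n := by
  classical
  refine ⟨Finset.univ.filter fun m => v m = 0, by simp, ?_⟩
  unfold hWeight
  have := Finset.card_filter_add_card_filter_not (s := (Finset.univ : Finset (Fin n)))
    (fun m => v m = 0)
  simp only [Finset.card_univ, Fintype.card_fin] at this
  convert this

open Polynomial in
theorem weight_lb {F : Type*} [Field F] (n : ℕ) (ω : F)
    (h : IsPrimitiveRoot ω n) (r : ℕ) (hr : 2 * r + 1 ≤ n) (p : F[X])
    (hp : p ∈ degreeLT F (2 * r + 1)) (h0 : p ≠ 0) : n - 2 * r ≤ hWeight (evT n ω r p) := by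
  classical
  have hω : ω ≠ 0 := h.ne_zero (by omega)
  obtain ⟨Z, hZ, hc⟩ := hWeight_add (evT n ω r p)
  have hd : p.natDegree < 2 * r + 1 := by
    rw [mem_degreeLT] at hp
    exact (natDegree_lt_iff_degree_lt h0).2 hp
  have hinj : Set.InjOn (fun m : Fin n => ω ^ m.val) Z := by
    intro a _ b _ hab
    exact Fin.ext (h.pow_inj a.2 b.2 hab)
  have h1 : (Z.image (fun m : Fin n => ω ^ m.val)).card ≤ p.natDegree := by
    by_contra! hlt
    apply h0
    apply eq_zero_of_natDegree_lt_card_of_eval_eq_zero' p _ _ hlt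
    intro x hx
    obtain ⟨m, hm, rfl⟩ := Finset.mem_image.1 hx
    have := (hZ m).1 hm
    simp only [evT, LinearMap.coe_mk, AddHom.coe_mk] at this
    exact (mul_eq_zero.1 this).resolve_left (pow_ne_zero _ hω)
  rw [Finset.card_image_of_injOn hinj] at h1
  omega

open Polynomial in
theorem evT_inj {F : Type*} [Field F] (n : ℕ) (ω : F)
    (h : IsPrimitiveRoot ω n) (r : ℕ) (hr : 2 * r + 1 ≤ n) (p : F[X])
    (hp : p ∈ degreeLT F (2 * r + 1)) (h0 : evT n ω r p = 0) : p = 0 := by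
  by_contra hne
  have := weight_lb n ω h r hr p hp hne
  rw [h0] at this
  simp [hWeight] at this
  omega

open Polynomial in
theorem weight_attained {F : Type*} [Field F] (n : ℕ) (ω : F)
    (h : IsPrimitiveRoot ω n) (r : ℕ) (hr : 2 * r + 1 ≤ n) :
    ∃ p ∈ degreeLT F (2 * r + 1), p ≠ 0 ∧ hWeight (evT n ω r p) = n - 2 * r := by
  classical
  set p : F[X] := ∏ j ∈ Finset.range (2 * r), (X - C (ω ^ j)) with hpdef
  have hmon : p.Monic := monic_prod_of_monic _ _ fun j _ => monic_X_sub_C _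
  have hmem : p ∈ degreeLT F (2 * r + 1) := by
    rw [mem_degreeLT, ← natDegree_lt_iff_degree_lt hmon.ne_zero, hpdef,
      natDegree_finsetProd_X_sub_C_eq_card, Finset.card_range]
    omega
  refine ⟨p, hmem, hmon.ne_zero, le_antisymm ?_ (weight_lb n ω h r hr p hmem hmon.ne_zero)⟩
  obtain ⟨Z, hZ, hc⟩ := hWeight_add (evT n ω r p)
  have h2 : Finset.univ.image (fun j : Fin (2 * r) => (⟨j.val, by omega⟩ : Fin n)) ⊆ Z := by
    intro m hm
    obtain ⟨j, _, rfl⟩ := Finset.mem_image.1 hm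
    rw [hZ]
    simp only [evT, LinearMap.coe_mk, AddHom.coe_mk, hpdef, eval_prod]
    rw [Finset.prod_eq_zero (i := j.val) (Finset.mem_range.2 j.2) (by simp), mul_zero]
  have h3 := Finset.card_le_card h2
  rw [Finset.card_image_of_injective _ (by intro a b hab; simpa [Fin.ext_iff] using hab)] at h3
  simp at h3
  omega

open Polynomial in
theorem lcd_aux {F : Type*} [Field F] (n : ℕ) [NeZero n] (ω : F)
    (h : IsPrimitiveRoot ω n) (r : ℕ) (hr : 2 * r + 1 ≤ n) (p : F[X])
    (hp : p ∈ degreeLT F (2 * r + 1))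
    (hd : evT n ω r p ∈ dualCode ((degreeLT F (2 * r + 1)).map (evT n ω r))) : p = 0 := by
  by_contra h0
  have hdeg : p.natDegree < 2 * r + 1 := by
    rw [mem_degreeLT] at hp
    exact (natDegree_lt_iff_degree_lt h0).2 hp
  apply h0
  ext k
  rw [coeff_zero]
  by_cases hk : 2 * r < k
  · exact coeff_eq_zero_of_natDegree_lt (by omega)
  have hn : (n : F) ≠ 0 := h.neZero'.ne
  have h1 := hd (evT n ω r (X ^ (2 * r - k))) ⟨_, by
    rw [SetLike.mem_coe, mem_degreeLT, degree_X_pow]; exact_mod_cast (by omega), rfl⟩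
  have h2 : ∀ m : Fin n, evT n ω r (X ^ (2 * r - k)) m * evT n ω r p m
      = ∑ j ∈ Finset.range (2 * r + 1), p.coeff j * ω ^ ((2 * n - k + j) * m.val) := by
    intro m
    simp only [evT, LinearMap.coe_mk, AddHom.coe_mk, eval_pow, eval_X]
    rw [eval_eq_sum_range' hdeg, Finset.mul_sum, Finset.mul_sum]
    refine Finset.sum_congr rfl fun j _ => ?_
    have : (2 * n - k + j) = (n - r) + (2 * r - k) + (n - r) + j := by omega
    rw [this]
    ring
  simp_rw [h2] at h1
  rw [Finset.sum_comm, Finset.sum_eq_single k] at h1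
  · rw [← Finset.mul_sum] at h1
    have : ∀ m : Fin n, ω ^ ((2 * n - k + k) * m.val) = 1 := by
      intro m
      rw [show 2 * n - k + k = n * 2 by omega, mul_assoc, pow_mul, h.pow_eq_one, one_pow]
    simp only [this, Finset.sum_const, Finset.card_univ, Fintype.card_fin, nsmul_eq_mul,
      mul_one] at h1
    exact (mul_eq_zero.1 h1).resolve_right hn
  · intro j hj hjk
    rw [Finset.mem_range] at hj
    rw [← Finset.mul_sum, geom_zero n ω h, mul_zero]
    rintro ⟨c, hc⟩
    rcases Nat.lt_or_ge c 2 with hc2 | hc2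
    · have : n * c ≤ n * 1 := Nat.mul_le_mul_left n (by omega)
      omega
    · rcases Nat.lt_or_ge 2 c with hc3 | hc3
      · have : n * 3 ≤ n * c := Nat.mul_le_mul_left n (by omega)
        omega
      · obtain rfl : c = 2 := by omega
        omega
  · intro hh
    exact absurd (Finset.mem_range.2 (by omega)) hh

/-- The span of the `2r+1` rows `e_0, …, e_r, e_{n−r}, …, e_{n−1}` of the
Fourier matrix is an LCD MDS code of length `n`, dimension `2r+1` and minimum distance `n − 2r`. -/
theorem span_symmetric_block_LCD_MDS {F : Type*} [Field F] (n : ℕ) [NeZero n] (ω : F)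
    (hω1 : ω ^ n = 1) (hωprim : ∀ i : ℕ, 1 ≤ i → i < n → ω ^ i ≠ 1)
    (r : ℕ) (hr : 2 * r + 1 ≤ n)
    (C : Submodule F (Fin n → F))
    (hC : C = Submodule.span F
      (fourierRow n ω '' {i : ZMod n | i.val ≤ r ∨ n - r ≤ i.val})) :
    Module.finrank F C = 2 * r + 1 ∧ minDist C = n - 2 * r ∧ C ⊓ dualCode C = ⊥ := by
  have h : IsPrimitiveRoot ω n := IsPrimitiveRoot.mk_of_lt ω (NeZero.pos n) hω1 
    (fun l hl hln => hωprim l hl hln)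
  rw [C_eq_map n ω h r hr] at hC
  subst hC
  have hinj : ∀ p ∈ Polynomial.degreeLT F (2 * r + 1), evT n ω r p = 0 → p = 0 :=
    evT_inj n ω h r hr
  refine ⟨?_, ?_, ?_⟩
  · have hi : Function.Injective ((evT n ω r).domRestrict (Polynomial.degreeLT F (2 * r + 1))) := by
      rw [← LinearMap.ker_eq_bot, LinearMap.ker_eq_bot']
      rintro ⟨p, hp⟩ h0
      exact Subtype.ext (hinj p hp h0)
    have := LinearMap.finrank_range_of_inj hi
    rw [LinearMap.range_domRestrict] at this
    rw [this, (Polynomial.degreeLTEquiv F (2 * r + 1)).finrank_eq]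
    simp
  · unfold minDist
    obtain ⟨p, hp, h0, hw⟩ := weight_attained n ω h r hr
    apply le_antisymm
    · exact Nat.sInf_le ⟨_, ⟨p, hp, rfl⟩, fun hh => h0 (hinj p hp hh), hw⟩
    · apply le_csInf
      · exact ⟨_, _, ⟨p, hp, rfl⟩, fun hh => h0 (hinj p hp hh), hw⟩
      · rintro _ ⟨_, ⟨q, hq, rfl⟩, hne, rfl⟩
        exact weight_lb n ω h r hr q hq (by rintro rfl; simp at hne)
  · rw [eq_bot_iff]
    rintro _ ⟨⟨p, hp, rfl⟩, hd⟩
    rw [lcd_aux n ω h r hr p hp hd]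
    simp
end

section
/- Let n ≥ 1, let ω be a primitive n-th root of unity in a field F, and let e_0, …, e_{n−1} ∈ F^n be the rows of the Fourier matrix. Let k be an integer with gcd(k, n) = 1 and let r ≥ 0 satisfy 2r + 1 ≤ n. Let C be the F-linear span of the 2r+1 rows e_{(i·k) mod n} for i = −r, −r+1, …, −1, 0, 1, …, r. Then C is an LCD MDS code of length n, dimension 2r+1, and minimum distance n − 2r. -/
open Polynomial in
/-- Evaluation map parametrizing the code. -/
noncomputable def evMap {F : Type*} [Field F] (n r : ℕ) (z : F) :
    F[X] →ₗ[F] (Fin n → F) where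
  toFun p := fun m => ((z ^ m.val) ^ (-(r : ℤ))) * p.eval (z ^ m.val)
  map_add' p q := by ext m; simp [mul_add]
  map_smul' c p := by ext m; simp; ring

lemma fourierRow_eq {F : Type*} [Field F] (n : ℕ) [NeZero n] (ω : F)
    (hω1 : ω ^ n = 1) (h0 : ω ≠ 0) (k i : ℤ) (m : Fin n) :
    fourierRow n ω ((i * k : ℤ) : ZMod n) m = ((ω ^ k) ^ m.val) ^ i := by
  have h1 : ω ^ (((i * k : ℤ) : ZMod n).val) = ω ^ (i * k) := by
    rw [← zpow_natCast, ZMod.val_intCast]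
    conv_rhs => rw [← Int.emod_add_mul_ediv (i * k) n]
    rw [zpow_add₀ h0, zpow_mul ω (n : ℤ), zpow_natCast ω n, hω1, one_zpow, mul_one]
  unfold fourierRow
  rw [pow_mul, h1, ← zpow_natCast, ← zpow_natCast, ← zpow_mul, ← zpow_mul, ← zpow_mul]
  congr 1
  ring

lemma char_sum {F : Type*} [Field F] (n : ℕ) (z : F) (hz : IsPrimitiveRoot z n) (d : ℤ)
    (hd : d ≠ 0) (h1 : -(n : ℤ) < d) (h2 : d < n) :
    ∑ m : Fin n, (z ^ m.val) ^ d = 0 := by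
  have hy : z ^ d ≠ 1 := by
    intro h
    rw [hz.zpow_eq_one_iff_dvd] at h
    exact hd (Int.eq_zero_of_abs_lt_dvd h (abs_lt.mpr ⟨h1, h2⟩))
  have : ∀ m : Fin n, (z ^ m.val) ^ d = (z ^ d) ^ m.val := by
    intro m
    rw [← zpow_natCast, ← zpow_natCast, zpow_comm]
  simp_rw [this]
  rw [Fin.sum_univ_eq_sum_range (fun m => (z ^ d) ^ m) n, geom_sum_eq hy]
  have : (z ^ d) ^ n = 1 := by
    rw [← zpow_natCast, zpow_comm, zpow_natCast, hz.pow_eq_one, one_zpow]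
  rw [this]; simp

open Polynomial in
lemma zeros_card {F : Type*} [Field F] (n r : ℕ) (z : F) (hz : IsPrimitiveRoot z n)
    (hz0 : z ≠ 0) (p : F[X]) (hp : p ∈ degreeLT F (2 * r + 1)) (hp0 : p ≠ 0) :
    n - 2 * r ≤ hWeight (evMap n r z p) := by
  classical
  unfold hWeight
  have hzero : (Finset.univ.filter fun m : Fin n => ¬ (evMap n r z p m ≠ 0)).card ≤ 2 * r := by
    have hdeg : p.natDegree ≤ 2 * r := by
      rw [mem_degreeLT] at hp
      have := (natDegree_lt_iff_degree_lt hp0).mpr hp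
      omega
    refine le_trans ?_ (le_trans (p.card_roots') hdeg)
    refine le_trans ?_ (Multiset.toFinset_card_le _)
    refine Finset.card_le_card_of_injOn (fun m => z ^ m.val) ?_ ?_
    · intro m hm
      simp [evMap, hz0] at hm
      simp [hp0, hm]
    · intro a _ b _ hab
      exact Fin.ext (hz.pow_inj a.2 b.2 hab)
  have := Finset.card_filter_add_card_filter_not (s := (Finset.univ : Finset (Fin n)))
    (fun m => evMap n r z p m ≠ 0)
  simp only [Finset.card_univ, Fintype.card_fin] at this
  convert (show n - 2 * r ≤ (Finset.univ.filter fun m : Fin n => evMap n r z p m ≠ 0).card by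
    omega)

lemma hWeight_zero' {F : Type*} [Field F] (n : ℕ) : hWeight (0 : Fin n → F) = 0 := by
  simp [hWeight]

open Polynomial in
lemma exists_min {F : Type*} [Field F] (n r : ℕ) (z : F) (hr : 2 * r + 1 ≤ n) :
    ∃ p ∈ degreeLT F (2 * r + 1), p ≠ 0 ∧ hWeight (evMap n r z p) ≤ n - 2 * r := by
  classical
  have hm : (∏ j ∈ Finset.range (2 * r), (X - C (z ^ j))).Monic :=
    monic_prod_of_monic _ _ fun j _ => monic_X_sub_C _
  refine ⟨∏ j ∈ Finset.range (2 * r), (X - C (z ^ j)), ?_, hm.ne_zero, ?_⟩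
  · rw [mem_degreeLT, ← natDegree_lt_iff_degree_lt hm.ne_zero, natDegree_prod_of_monic _ _
      fun j _ => monic_X_sub_C _]
    simp only [natDegree_X_sub_C]
    simp
  · unfold hWeight
    have : (Finset.Ico (2 * r) n).card = n - 2 * r := by simp
    rw [← this]
    refine Finset.card_le_card_of_injOn (fun m => m.val) ?_ ?_
    · intro m hm
      simp only [Finset.coe_filter, Finset.mem_univ, true_and, Set.mem_ofPred_eq] at hm
      simp only [Finset.coe_Ico, Set.mem_Ico]
      refine ⟨?_, m.2⟩
      by_contra! hlt
      apply hm
      simp only [evMap, LinearMap.coe_mk, AddHom.coe_mk, eval_prod]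
      rw [Finset.prod_eq_zero (Finset.mem_range.mpr hlt) (by simp), mul_zero]
    · intro a _ b _ hab
      exact Fin.ext hab

/-- For `gcd(k, n) = 1` and `2r + 1 ≤ n`, the span of the `2r+1` rows
`e_{(i·k) mod n}` for `i = −r, …, −1, 0, 1, …, r` is an LCD MDS code of length `n`,
dimension `2r+1` and minimum distance `n − 2r`. -/
theorem span_arith_symmetric_LCD_MDS {F : Type*} [Field F] (n : ℕ) [NeZero n] (ω : F)
    (hω1 : ω ^ n = 1) (hωprim : ∀ i : ℕ, 1 ≤ i → i < n → ω ^ i ≠ 1)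
    (k : ℤ) (hk : Int.gcd k n = 1) (r : ℕ) (hr : 2 * r + 1 ≤ n)
    (C : Submodule F (Fin n → F))
    (hC : C = Submodule.span F (fourierRow n ω ''
      ((fun i : ℤ => ((i * k : ℤ) : ZMod n)) '' {i : ℤ | -(r : ℤ) ≤ i ∧ i ≤ (r : ℤ)}))) :
    Module.finrank F C = 2 * r + 1 ∧ minDist C = n - 2 * r ∧ C ⊓ dualCode C = ⊥ := by
  classical
  have hn : n ≠ 0 := NeZero.ne n
  have hω : IsPrimitiveRoot ω n := by
    refine IsPrimitiveRoot.mk_of_lt ω (Nat.pos_of_ne_zero hn) hω1 ?_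
    intro l h0 hl
    exact hωprim l h0 hl
  have h0 : ω ≠ 0 := hω.ne_zero hn
  have hz : IsPrimitiveRoot (ω ^ k) n := hω.zpow_of_gcd_eq_one k hk
  have hrow := fourierRow_eq n ω hω1 h0 k
  generalize ω ^ k = z at hz hrow
  have hz0 : z ≠ 0 := hz.ne_zero hn
  have hmono : ∀ j : ℕ, evMap n r z (Polynomial.X ^ j) =
      fourierRow n ω ((((j : ℤ) - r) * k : ℤ) : ZMod n) := by
    intro j
    ext m
    rw [hrow]
    simp only [evMap, LinearMap.coe_mk, AddHom.coe_mk, Polynomial.eval_pow, Polynomial.eval_X]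
    rw [← zpow_natCast _ j, ← zpow_add₀ (pow_ne_zero _ hz0)]
    congr 1
    ring
  have hCmap : C = (Polynomial.degreeLT F (2 * r + 1)).map (evMap n r z) := by
    rw [hC, Polynomial.degreeLT_eq_span_X_pow, Submodule.map_span]
    congr 1
    ext v
    constructor
    · rintro ⟨_, ⟨i, ⟨hi1, hi2⟩, rfl⟩, rfl⟩
      refine ⟨Polynomial.X ^ (i + r).toNat, ?_, ?_⟩
      · simp only [Finset.coe_image, Finset.coe_range]
        exact ⟨(i + r).toNat, by simp only [Set.mem_Iio]; omega, rfl⟩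
      · rw [hmono]
        have : (((i + r).toNat : ℤ) - r) = i := by omega
        rw [this]
    · rintro ⟨p, hp, rfl⟩
      simp only [Finset.coe_image, Finset.coe_range] at hp
      obtain ⟨j, hj, rfl⟩ := hp
      simp only [Set.mem_Iio] at hj
      exact ⟨_, ⟨(j : ℤ) - r, ⟨by omega, by omega⟩, rfl⟩, (hmono j).symm⟩
  have hinj : ∀ p ∈ Polynomial.degreeLT F (2 * r + 1), evMap n r z p = 0 → p = 0 := by
    intro p hp h
    by_contra hp0
    have := zeros_card n r z hz hz0 p hp hp0
    rw [h, hWeight_zero'] at this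
    omega
  refine ⟨?_, ?_, ?_⟩
  · have hi : Function.Injective ((evMap n r z).domRestrict
        (Polynomial.degreeLT F (2 * r + 1))) := by
      rw [injective_iff_map_eq_zero]
      intro a ha
      exact Subtype.ext (hinj a.1 a.2 ha)
    have h1 := LinearMap.finrank_range_of_inj hi
    rw [LinearMap.range_domRestrict, ← hCmap] at h1
    rw [h1, (Polynomial.degreeLTEquiv F (2 * r + 1)).finrank_eq]
    simp
  · obtain ⟨p, hp, hp0, hw⟩ := exists_min n r z hr
    have hge := zeros_card n r z hz hz0 p hp hp0
    unfold minDist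
    apply le_antisymm
    · apply Nat.sInf_le
      refine ⟨evMap n r z p, hCmap ▸ Submodule.mem_map_of_mem hp, ?_, le_antisymm hw hge⟩
      exact fun h => hp0 (hinj p hp h)
    · apply le_csInf
      · exact ⟨_, evMap n r z p, hCmap ▸ Submodule.mem_map_of_mem hp,
          fun h => hp0 (hinj p hp h), rfl⟩
      · rintro d ⟨v, hv, hv0, rfl⟩
        rw [hCmap] at hv
        obtain ⟨q, hq, rfl⟩ := hv
        exact zeros_card n r z hz hz0 q hq (fun h => hv0 (by rw [h, map_zero]))
  · rw [eq_bot_iff]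
    rintro v ⟨hv, hd⟩
    have hnF : (n : F) ≠ 0 := by
      have := hz.neZero'
      exact this.ne
    have hv' := hv
    rw [SetLike.mem_coe, hCmap] at hv'
    obtain ⟨p, hp, rfl⟩ := hv'
    have hpz : p = 0 := by
      ext t
      rw [Polynomial.coeff_zero]
      rw [SetLike.mem_coe, Polynomial.mem_degreeLT] at hp
      by_cases ht : 2 * r + 1 ≤ t
      · exact Polynomial.coeff_eq_zero_of_degree_lt (lt_of_lt_of_le hp (by exact_mod_cast ht))
      push Not at ht
      have hmem : fourierRow n ω ((((r : ℤ) - t) * k : ℤ) : ZMod n) ∈ C := by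
        rw [hC]
        exact Submodule.subset_span ⟨_, ⟨(r : ℤ) - t, ⟨by omega, by omega⟩, rfl⟩, rfl⟩
      have hs := hd _ hmem
      have hev : ∀ y : F, p.eval y = ∑ j ∈ Finset.range (2 * r + 1), p.coeff j * y ^ j := by
        intro y
        by_cases hp0 : p = 0
        · simp [hp0]
        exact Polynomial.eval_eq_sum_range' ((Polynomial.natDegree_lt_iff_degree_lt hp0).mpr hp) y
      have hterm : ∀ m : Fin n, fourierRow n ω ((((r : ℤ) - t) * k : ℤ) : ZMod n) m *
          evMap n r z p m =
          ∑ j ∈ Finset.range (2 * r + 1), p.coeff j * (z ^ m.val) ^ ((j : ℤ) - t) := by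
        intro m
        rw [hrow]
        simp only [evMap, LinearMap.coe_mk, AddHom.coe_mk]
        rw [hev, ← mul_assoc, ← zpow_add₀ (pow_ne_zero _ hz0), Finset.mul_sum]
        refine Finset.sum_congr rfl fun j _ => ?_
        rw [mul_left_comm, ← zpow_natCast (z ^ m.val) j, ← zpow_add₀ (pow_ne_zero _ hz0)]
        congr 2
        ring
      simp_rw [hterm] at hs
      rw [Finset.sum_comm, Finset.sum_eq_single t] at hs
      · simpa [hnF] using hs
      · intro j hj hjt
        rw [Finset.mem_range] at hj
        rw [← Finset.mul_sum, char_sum n z hz _ (by omega) (by omega) (by omega), mul_zero]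
      · intro h
        exact absurd (Finset.mem_range.mpr ht) h
    rw [hpz, map_zero]
    exact Submodule.zero_mem _
end

section
/- Let F be a finite field with q elements, let n be odd with n ∣ (q − 1), and let r be any integer with 0 < r < n. Then there exists a linear code C ⊆ F^n with dim C = r, minimum distance n − r + 1, and C ∩ C^⊥ = {0}; that is, an LCD MDS (n, r, n−r+1) code exists over F. -/
open Polynomial in
noncomputable def encAux {F : Type*} [Field F] (w : F) (a n r : ℕ) :
    (degreeLT F r) →ₗ[F] (Fin n → F) where
  toFun f := fun m => w ^ (a * (m : ℕ)) * (f : F[X]).eval (w ^ (m : ℕ))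
  map_add' f g := by ext m; simp [mul_add]
  map_smul' c f := by ext m; simp; ring

theorem exists_primRoot_aux (F : Type*) [Field F] [Fintype F] (n : ℕ)
    (hdvd : n ∣ Fintype.card F - 1) : ∃ w : F, IsPrimitiveRoot w n := by
  classical
  obtain ⟨g, hg⟩ := IsCyclic.exists_ofOrder_eq_natCard (α := Fˣ)
  rw [Nat.card_eq_fintype_card, Fintype.card_units] at hg
  have hq : 0 < Fintype.card F - 1 := by
    have := Fintype.one_lt_card (α := F); omega
  obtain ⟨k, hk⟩ := hdvd
  have h1 : IsPrimitiveRoot g (Fintype.card F - 1) := hg ▸ IsPrimitiveRoot.orderOf g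
  have h2 := h1.pow hq (a := k) (b := n) (by rw [hk, mul_comm])
  exact ⟨((g ^ k : Fˣ) : F), IsPrimitiveRoot.coe_units_iff.2 h2⟩

theorem natCast_ne_zero_aux (F : Type*) [Field F] [Fintype F] (n : ℕ)
    (hdvd : n ∣ Fintype.card F - 1) : (n : F) ≠ 0 := by
  intro h0
  obtain ⟨k, hk⟩ := hdvd
  have h1 : 1 < Fintype.card F := Fintype.one_lt_card
  have h2 : Fintype.card F = n * k + 1 := by omega
  have h3 : ((Fintype.card F : ℕ) : F) = 0 := by simp
  rw [h2] at h3
  simp [h0] at h3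

theorem geom_aux {F : Type*} [Field F] {w : F} {n : ℕ} (hw : IsPrimitiveRoot w n) (e : ℕ)
    (he : ¬ n ∣ e) : ∑ m : Fin n, w ^ (e * (m : ℕ)) = 0 := by
  rw [Fin.sum_univ_eq_sum_range (fun m => w ^ (e * m))]
  have h1 : w ^ e ≠ 1 := fun h => he (hw.dvd_of_pow_eq_one e h)
  simp_rw [pow_mul]
  rw [geom_sum_eq h1, ← pow_mul, mul_comm, pow_mul, hw.pow_eq_one]
  simp

open Polynomial in
theorem zeros_aux {F : Type*} [Field F] {w : F} {n r : ℕ} (hw : IsPrimitiveRoot w n)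
    (hn : 0 < n) (a : ℕ) (f : degreeLT F r) (hf : f ≠ 0) :
    n + 1 ≤ hWeight (encAux w a n r f) + r := by
  classical
  have hw0 : w ≠ 0 := hw.ne_zero hn.ne'
  have hf' : (f : F[X]) ≠ 0 := by simpa using hf
  have hdeg : (f : F[X]).natDegree < r :=
    (natDegree_lt_iff_degree_lt hf').2 (mem_degreeLT.1 f.2)
  have hz : (Finset.univ.filter fun m : Fin n => encAux w a n r f m = 0).card
      ≤ (f : F[X]).natDegree := by
    calc _ ≤ (f : F[X]).roots.toFinset.card := by
          apply Finset.card_le_card_of_injOn (fun m : Fin n => w ^ (m : ℕ))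
          · intro m hm
            have : encAux w a n r f m = 0 := by simpa using hm
            simpa [encAux, hf', hw0] using this
          · intro i _ j _ hij
            exact Fin.ext (hw.pow_inj i.2 j.2 hij)
      _ ≤ _ := Multiset.toFinset_card_le _
      _ ≤ _ := card_roots' _
  have hs := Finset.card_filter_add_card_filter_not (s := (Finset.univ : Finset (Fin n)))
    (fun m => encAux w a n r f m = 0)
  have hW : hWeight (encAux w a n r f)
    = (Finset.univ.filter fun m : Fin n => ¬ encAux w a n r f m = 0).card := by
    unfold hWeight; congr
  rw [← hW] at hs
  simp only [Finset.card_univ, Fintype.card_fin] at hs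
  omega

open Polynomial in
theorem attain_aux {F : Type*} [Field F] {w : F} {n r : ℕ} (hw : IsPrimitiveRoot w n)
    (hr : 0 < r) (hrn : r < n) (a : ℕ) :
    ∃ f : degreeLT F r, f ≠ 0 ∧ hWeight (encAux w a n r f) + r ≤ n + 1 := by
  classical
  set p : F[X] := ∏ i ∈ Finset.range (r - 1), (X - C (w ^ i)) with hp
  have hmon : p.Monic := monic_prod_of_monic _ _ fun i _ => monic_X_sub_C _
  have hdeg : p.natDegree = r - 1 := by
    rw [hp, natDegree_prod_of_monic _ _ fun i _ => monic_X_sub_C _]; simp only [natDegree_X_sub_C]; simp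
  have hmem : p ∈ degreeLT F r := by
    rw [mem_degreeLT, ← natDegree_lt_iff_degree_lt hmon.ne_zero]; omega
  refine ⟨⟨p, hmem⟩, fun h => hmon.ne_zero (congrArg Subtype.val h), ?_⟩
  have hle : hWeight (encAux w a n r ⟨p, hmem⟩) ≤ (Finset.Ico (r-1) n).card := by
    unfold hWeight
    apply Finset.card_le_card_of_injOn (fun m : Fin n => (m : ℕ))
    · intro m hm
      simp only [Finset.coe_filter, Finset.mem_univ, true_and, Set.mem_ofPred_eq] at hm
      simp only [Finset.coe_Ico, Set.mem_Ico]
      refine ⟨?_, m.2⟩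
      by_contra hlt
      push Not at hlt
      apply hm
      have : p.eval (w ^ (m : ℕ)) = 0 := by
        rw [hp, eval_prod]
        exact Finset.prod_eq_zero (Finset.mem_range.2 hlt) (by simp)
      simp [encAux, this]
    · intro i _ j _ hij
      exact Fin.ext hij
  rw [Nat.card_Ico] at hle
  omega

open Polynomial in
theorem lcd_aux_s13 {F : Type*} [Field F] {w : F} {n r : ℕ} (hw : IsPrimitiveRoot w n)
    (hn0 : (n : F) ≠ 0) (hrn : r < n) (a : ℕ) (ha : n ∣ 2 * a + (r - 1))
    (f : degreeLT F r) (hf : ∀ g : degreeLT F r,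
      ∑ m, encAux w a n r g m * encAux w a n r f m = 0) : f = 0 := by
  have key : ∀ j < r, (f : F[X]).coeff j = 0 := by
    intro j hj
    have hmem : (X ^ (r - 1 - j) : F[X]) ∈ degreeLT F r := by
      rw [mem_degreeLT, degree_X_pow]; exact_mod_cast (by omega)
    have h := hf ⟨_, hmem⟩
    have hev : ∀ x : F, (f : F[X]).eval x = ∑ i ∈ Finset.range r, (f : F[X]).coeff i * x ^ i := by
      intro x
      by_cases h0 : (f : F[X]) = 0
      · simp [h0]
      · exact eval_eq_sum_range' ((natDegree_lt_iff_degree_lt h0).2 (mem_degreeLT.1 f.2)) x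
    have h2 : ∑ i ∈ Finset.range r, (f : F[X]).coeff i *
        ∑ m : Fin n, w ^ ((2 * a + (r - 1 - j) + i) * (m : ℕ)) = 0 := by
      rw [← h]
      simp_rw [Finset.mul_sum]
      rw [Finset.sum_comm]
      refine Finset.sum_congr rfl fun m _ => ?_
      simp only [encAux, LinearMap.coe_mk, AddHom.coe_mk, hev, eval_pow, eval_X]
      rw [Finset.mul_sum, Finset.mul_sum]
      refine Finset.sum_congr rfl fun i _ => ?_
      ring
    rw [Finset.sum_eq_single j] at h2
    · obtain ⟨k, hk⟩ := ha
      have he : 2 * a + (r - 1 - j) + j = n * k := by omega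
      rw [he] at h2
      simp_rw [mul_assoc, pow_mul, hw.pow_eq_one] at h2
      simpa [hn0] using h2
    · intro i hi hij
      rw [geom_aux hw, mul_zero]
      intro hd
      have hi := Finset.mem_range.1 hi
      rcases lt_or_gt_of_ne hij with hlt | hlt
      · have : 2 * a + (r - 1) = (2 * a + (r - 1 - j) + i) + (j - i) := by omega
        rw [this] at ha
        have := Nat.le_of_dvd (by omega) ((Nat.dvd_add_right hd).1 ha)
        omega
      · have : 2 * a + (r - 1 - j) + i = (2 * a + (r - 1)) + (i - j) := by omega
        rw [this] at hd
        have := Nat.le_of_dvd (by omega) ((Nat.dvd_add_right ha).1 hd)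
        omega
    · intro h; exact absurd (Finset.mem_range.2 hj) h
  ext j
  by_cases hj : j < r
  · simpa using key j hj
  · have := mem_degreeLT.1 f.2
    simpa using coeff_eq_zero_of_degree_lt (this.trans_le (by exact_mod_cast not_lt.1 hj))

/-- Over a finite field `F` with `q` elements, for `n` odd with
`n ∣ (q − 1)` and any `0 < r < n`, there exists an LCD MDS `(n, r, n−r+1)` code over `F`. -/
theorem exists_LCD_MDS_code_odd_length (F : Type*) [Field F] [Fintype F] (n r : ℕ)
    (hn : Odd n) (hdvd : n ∣ Fintype.card F - 1) (hr0 : 0 < r) (hrn : r < n) :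
    ∃ C : Submodule F (Fin n → F),
      Module.finrank F C = r ∧ minDist C = n - r + 1 ∧ C ⊓ dualCode C = ⊥ := by
  obtain ⟨w, hw⟩ := exists_primRoot_aux F n hdvd
  have hn0 := natCast_ne_zero_aux F n hdvd
  obtain ⟨a, ha⟩ : ∃ a, n ∣ 2 * a + (r - 1) := by
    obtain ⟨t, ht⟩ := hn
    rcases Nat.even_or_odd' r with ⟨s, hs | hs⟩
    · exact ⟨t + 1 - s, 1, by omega⟩
    · exact ⟨n - s, 2, by omega⟩
  have hinj : Function.Injective (encAux w a n r) := by
    rw [← LinearMap.ker_eq_bot, LinearMap.ker_eq_bot']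
    intro f hf
    exact lcd_aux_s13 hw hn0 hrn a ha f (by simp [hf])
  refine ⟨LinearMap.range (encAux w a n r), ?_, ?_, ?_⟩
  · rw [LinearMap.finrank_range_of_inj hinj, (Polynomial.degreeLTEquiv F r).finrank_eq]
    simp
  · obtain ⟨f, hf0, hf⟩ := attain_aux hw hr0 hrn a
    have hlow := zeros_aux hw (by omega) a f hf0
    apply le_antisymm
    · exact Nat.sInf_le ⟨_, ⟨f, rfl⟩, fun h => hf0 (hinj (by rw [h, map_zero])), by omega⟩
    · refine le_csInf ⟨_, _, ⟨f, rfl⟩, fun h => hf0 (hinj (by rw [h, map_zero])), rfl⟩ ?_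
      rintro d ⟨v, ⟨g, rfl⟩, hv, rfl⟩
      have := zeros_aux hw (by omega) a g (fun h => hv (by rw [h, map_zero]))
      omega
  · rw [eq_bot_iff]
    rintro v ⟨⟨f, rfl⟩, hv⟩
    have : f = 0 := lcd_aux_s13 hw hn0 hrn a ha f fun g => hv _ ⟨g, rfl⟩
    simp [this]
end

section
/- Let k ≥ 1 and d ≥ 1 be integers, set n = k + d − 1 (the smallest length permitted by the Singleton bound for dimension k and minimum distance d), and suppose at least one of k, n is odd. Let p be a prime not dividing n. Then there exist β ≥ 1 and a linear code C ⊆ GF(p^β)^n with dim C = k, minimum distance exactly d, and C ∩ C^⊥ = {0}; that is, an LCD MDS code of dimension k and minimum distance d exists with the smallest possible length n = k + d − 1 over a finite field of characteristic p. -/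
open Polynomial in
/-- Evaluation map of the (twisted) Reed-Solomon code. -/
noncomputable def rsMap {F : Type*} [Field F] (n a : ℕ) (w : F) :
    F[X] →ₗ[F] (Fin n → F) where
  toFun f := fun m => w ^ (a * (m : ℕ)) * f.eval (w ^ (m : ℕ))
  map_add' f g := by
    funext m
    simp [mul_add]
  map_smul' c f := by
    funext m
    simp
    ring

open Polynomial in
lemma rs_weight {F : Type*} [Field F] {n a k : ℕ} {w : F} (hw : IsPrimitiveRoot w n)
    (hn : 1 ≤ n) {f : F[X]} (hf : f ≠ 0) (hfk : f ∈ degreeLT F k) :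
    n < hWeight (rsMap n a w f) + k := by
  classical
  have hw0 : w ≠ 0 := hw.ne_zero (by omega)
  have h1 : hWeight (rsMap n a w f) +
      (Finset.univ.filter fun m : Fin n => ¬ (rsMap n a w f m ≠ 0)).card = n := by
    have := Finset.card_filter_add_card_filter_not (s := (Finset.univ : Finset (Fin n)))
      (fun m => rsMap n a w f m ≠ 0)
    simp only [Finset.card_univ, Fintype.card_fin] at this
    unfold hWeight
    convert this
  have h2 : (Finset.univ.filter fun m : Fin n => ¬ (rsMap n a w f m ≠ 0)).card
      ≤ f.roots.toFinset.card := by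
    apply Finset.card_le_card_of_injOn (fun m : Fin n => w ^ (m : ℕ))
    · intro m hm
      have hm' : w ^ (a * (m : ℕ)) * f.eval (w ^ (m : ℕ)) = 0 := by
        have h := hm
        simp only [Finset.coe_filter, Finset.mem_univ, true_and, Set.mem_ofPred_eq, not_not] at h
        exact h
      rcases mul_eq_zero.1 hm' with h | h
      · exact absurd h (pow_ne_zero _ hw0)
      · simp [hf, IsRoot, h]
    · intro i _ j _ hij
      exact Fin.ext (hw.pow_inj i.2 j.2 hij)
  have h3 := (Multiset.toFinset_card_le f.roots).trans (card_roots' f)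
  have h4 : f.natDegree < k := by
    rw [mem_degreeLT] at hfk
    exact (natDegree_lt_iff_degree_lt hf).2 hfk
  omega

lemma geom_root {F : Type*} [Field F] {n e : ℕ} {w : F} (hw : IsPrimitiveRoot w n) :
    ∑ m : Fin n, w ^ (e * (m : ℕ)) = if n ∣ e then (n : F) else 0 := by
  rw [Fin.sum_univ_eq_sum_range (fun m => w ^ (e * m)) n]
  simp only [pow_mul]
  split_ifs with h
  · rw [(hw.pow_eq_one_iff_dvd e).2 h]
    simp
  · have h1 : w ^ e ≠ 1 := fun h' => h ((hw.pow_eq_one_iff_dvd e).1 h')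
    rw [geom_sum_eq h1, ← pow_mul, mul_comm, pow_mul, hw.pow_eq_one]
    simp

open Polynomial in
lemma rs_pair {F : Type*} [Field F] {n a k : ℕ} {w : F} (hw : IsPrimitiveRoot w n)
    (hkn : k ≤ n) (ha : n ∣ 2 * a + (k - 1)) {f : F[X]} (hf : f.natDegree < k)
    {j : ℕ} (hj : j < k) :
    ∑ m, rsMap n a w (X ^ (k - 1 - j)) m * rsMap n a w f m = n * f.coeff j := by
  have h1 : ∀ m : Fin n, rsMap n a w (X ^ (k - 1 - j)) m * rsMap n a w f m =
      ∑ i ∈ Finset.range k, f.coeff i * w ^ ((2 * a + (k - 1 - j) + i) * (m : ℕ)) := by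
    intro m
    simp only [rsMap, LinearMap.coe_mk, AddHom.coe_mk, eval_pow, eval_X]
    rw [eval_eq_sum_range' hf, Finset.mul_sum, Finset.mul_sum]
    refine Finset.sum_congr rfl fun i _ => ?_
    ring
  simp only [h1]
  rw [Finset.sum_comm]
  simp only [← Finset.mul_sum, geom_root hw]
  rw [Finset.sum_eq_single j]
  · rw [if_pos, mul_comm]
    convert ha using 1
    omega
  · intro i hi hij
    rw [Finset.mem_range] at hi
    rw [if_neg, mul_zero]
    intro h
    obtain ⟨x, hx⟩ := h
    obtain ⟨y, hy⟩ := ha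
    have h5 : (i : ℤ) - j = n * ((x : ℤ) - y) := by
      rw [mul_sub]
      have := congrArg (Nat.cast : ℕ → ℤ) hx
      have := congrArg (Nat.cast : ℕ → ℤ) hy
      push_cast at *
      omega
    have h6 : (i : ℤ) - j = 0 := Int.eq_zero_of_abs_lt_dvd ⟨_, h5⟩ (by rw [abs_lt]; omega)
    omega
  · intro h
    simp [hj] at h

lemma exists_prim (p n : ℕ) [Fact p.Prime] (hn : 1 ≤ n) (hpn : ¬ p ∣ n) :
    ∃ β : ℕ, 1 ≤ β ∧ ∃ w : GaloisField p β, IsPrimitiveRoot w n := by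
  have hp : p.Prime := Fact.out
  refine ⟨n.totient, Nat.totient_pos.2 hn, ?_⟩
  have hφ : n.totient ≠ 0 := (Nat.totient_pos.2 hn).ne'
  have hc := GaloisField.card p n.totient hφ
  have hdvd : n ∣ p ^ n.totient - 1 := by
    have := Nat.ModEq.pow_totient ((hp.coprime_iff_not_dvd).2 hpn)
    exact (Nat.modEq_iff_dvd' (Nat.one_le_pow _ _ hp.pos)).1 this.symm
  obtain ⟨g, hg⟩ := IsCyclic.exists_ofOrder_eq_natCard (α := (GaloisField p n.totient)ˣ)
  have : Finite (GaloisField p n.totient) := Nat.finite_of_card_ne_zero (by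
    rw [hc]; exact (pow_pos hp.pos _).ne')
  rw [Nat.card_units, hc] at hg
  have hpos : 0 < p ^ n.totient - 1 := by
    have := Nat.one_lt_pow hφ hp.one_lt
    omega
  obtain ⟨c, hc'⟩ := hdvd
  have h1 : IsPrimitiveRoot g (p ^ n.totient - 1) := hg ▸ IsPrimitiveRoot.orderOf g
  have h2 : IsPrimitiveRoot (g ^ c) n := h1.pow hpos (by rw [hc', mul_comm])
  exact ⟨((g ^ c : (GaloisField p n.totient)ˣ) : GaloisField p n.totient),
    IsPrimitiveRoot.coe_units_iff.2 h2⟩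

open Polynomial in
lemma main_aux {F : Type*} [Field F] {k d n : ℕ} {w : F} (hw : IsPrimitiveRoot w n)
    (hk : 1 ≤ k) (hd : 1 ≤ d) (hn : n = k + d - 1) (hodd : Odd k ∨ Odd n)
    (hnF : (n : F) ≠ 0) :
    ∃ C : Submodule F (Fin n → F),
      Module.finrank F C = k ∧ minDist C = d ∧ C ⊓ dualCode C = ⊥ := by
  classical
  have hn1 : 1 ≤ n := by omega
  have hkn : k ≤ n := by omega
  obtain ⟨a, ha⟩ : ∃ a, n ∣ 2 * a + (k - 1) := by
    by_cases h : Odd k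
    · obtain ⟨t, ht⟩ := h
      exact ⟨n - t, 2, by omega⟩
    · have h' := hodd.resolve_left h
      rw [Nat.not_odd_iff_even] at h
      obtain ⟨t, ht⟩ := h
      obtain ⟨s, hs⟩ := h'
      exact ⟨s + 1 - t, 1, by omega⟩
  have hne : ∀ f ∈ degreeLT F k, f ≠ 0 → rsMap n a w f ≠ 0 := by
    intro f hf hf0 h
    have := rs_weight (a := a) hw hn1 hf0 hf
    rw [h] at this
    simp [hWeight] at this
    omega
  refine ⟨LinearMap.range ((rsMap n a w).domRestrict (degreeLT F k)), ?_, ?_, ?_⟩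
  · rw [LinearMap.finrank_range_of_inj, (degreeLTEquiv F k).finrank_eq]
    · simp
    · rw [← LinearMap.ker_eq_bot, LinearMap.ker_eq_bot']
      rintro ⟨f, hf⟩ h
      by_contra h0
      exact hne f hf (fun h' => h0 (by simp [h'])) h
  · have hlow : ∀ f ∈ degreeLT F k, f ≠ 0 → d ≤ hWeight (rsMap n a w f) := by
      intro f hf hf0
      have := rs_weight (a := a) hw hn1 hf0 hf
      omega
    let f : F[X] := ∏ i ∈ Finset.range (k - 1), (X - C (w ^ i))
    have hfm : f.Monic := monic_prod_of_monic _ _ fun i _ => monic_X_sub_C _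
    have hfd : f.natDegree = k - 1 := by
      have h := natDegree_prod_of_monic (Finset.range (k - 1)) (fun i => X - C (w ^ i))
        fun i _ => monic_X_sub_C _
      simp only [natDegree_X_sub_C, Finset.sum_const, Finset.card_range, smul_eq_mul,
        mul_one] at h
      exact h
    have hf : f ∈ degreeLT F k := by
      rw [mem_degreeLT, ← natDegree_lt_iff_degree_lt hfm.ne_zero]
      omega
    have hup : hWeight (rsMap n a w f) ≤ d := by
      have : hWeight (rsMap n a w f) ≤ (Finset.Ico (k - 1) n).card := by
        unfold hWeight
        apply Finset.card_le_card_of_injOn (fun m : Fin n => (m : ℕ))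
        · intro m hm
          simp only [Finset.coe_filter, Finset.mem_univ, true_and, Set.mem_ofPred_eq] at hm
          simp only [Finset.coe_Ico, Set.mem_Ico, m.2, and_true]
          by_contra hlt
          apply hm
          have : f.eval (w ^ (m : ℕ)) = 0 := by
            rw [eval_prod]
            exact Finset.prod_eq_zero (Finset.mem_range.2 (not_le.1 hlt)) (by simp)
          simp [rsMap, this]
        · exact fun i _ j _ h => Fin.ext h
      rw [Nat.card_Ico] at this
      omega
    have hmem : d ∈ {e | ∃ v ∈ LinearMap.range ((rsMap n a w).domRestrict (degreeLT F k)),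
        v ≠ 0 ∧ hWeight v = e} :=
      ⟨rsMap n a w f, ⟨⟨f, hf⟩, rfl⟩, hne f hf hfm.ne_zero,
        le_antisymm hup (hlow f hf hfm.ne_zero)⟩
    refine le_antisymm (Nat.sInf_le hmem) (le_csInf ⟨d, hmem⟩ ?_)
    rintro e ⟨v, ⟨⟨g, hg⟩, rfl⟩, hv0, rfl⟩
    refine hlow g hg ?_
    rintro rfl
    exact hv0 (map_zero (rsMap n a w))
  · rw [eq_bot_iff]
    rintro v ⟨⟨⟨f, hf⟩, rfl⟩, hv⟩
    have hf0 : f = 0 := by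
      by_contra hf0
      have hdeg : f.natDegree < k := (natDegree_lt_iff_degree_lt hf0).2 (mem_degreeLT.1 hf)
      apply hf0
      ext j
      by_cases hj : j < k
      · have h1 := hv (rsMap n a w (X ^ (k - 1 - j))) ⟨⟨X ^ (k - 1 - j), by
          rw [mem_degreeLT, degree_X_pow]
          exact_mod_cast (by omega : k - 1 - j < k)⟩, rfl⟩
        have h2 := rs_pair hw hkn ha hdeg hj
        have h3 : (n : F) * f.coeff j = 0 := h2.symm.trans h1
        simpa [hnF] using h3
      · simp [coeff_eq_zero_of_natDegree_lt (by omega : f.natDegree < j)]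
    subst hf0
    exact map_zero (rsMap n a w)

/-- For dimension `k ≥ 1` and distance `d ≥ 1`, with `n = k + d − 1`
(the smallest length permitted by the Singleton bound), if at least one of `k, n` is odd
and `p` is a prime not dividing `n`, then there exists an LCD MDS code of dimension `k`
and minimum distance exactly `d`, of length `n`, over some finite field `GF(p^β)` of
characteristic `p`. -/
theorem exists_LCD_MDS_min_length (k d p : ℕ) [Fact p.Prime] (hk : 1 ≤ k) (hd : 1 ≤ d)
    (n : ℕ) (hn : n = k + d - 1) (hodd : Odd k ∨ Odd n) (hpn : ¬ p ∣ n) :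
    ∃ β : ℕ, 1 ≤ β ∧ ∃ C : Submodule (GaloisField p β) (Fin n → GaloisField p β),
      Module.finrank (GaloisField p β) C = k ∧ minDist C = d ∧ C ⊓ dualCode C = ⊥ := by
  have hn1 : 1 ≤ n := by omega
  obtain ⟨β, hβ, w, hw⟩ := exists_prim p n hn1 hpn
  have hnF : (n : GaloisField p β) ≠ 0 := fun h =>
    hpn ((CharP.cast_eq_zero_iff (GaloisField p β) p n).1 h)
  exact ⟨β, hβ, main_aux hw hk hd hn hodd hnF⟩
end

section
/- Let k ≥ 2, let n = 2^k − 1, and let r be any integer with 0 < r < n. Then there exists a linear code C ⊆ GF(2^k)^n with dim C = r, minimum distance n − r + 1, and C ∩ C^⊥ = {0}; that is, an LCD MDS (n, r, n−r+1) code of length 2^k − 1 exists over the finite field GF(2^k) of characteristic 2. -/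
open Polynomial in
/-- Generalized Reed-Solomon encoding map. -/
noncomputable def encMap {F : Type*} [Field F] (n r a : ℕ) (w : F) :
    Polynomial.degreeLT F r →ₗ[F] (Fin n → F) where
  toFun p := fun m => (w ^ (m : ℕ)) ^ a * (p : F[X]).eval (w ^ (m : ℕ))
  map_add' p q := by ext m; simp [mul_add]
  map_smul' c p := by ext m; simp; ring

theorem zeros_card_s17 {F : Type*} [Field F] {n r : ℕ} {w : F}
    (hw : IsPrimitiveRoot w n) (p : Polynomial F) (hp : p ≠ 0) (hd : p.degree < r)
    (s : Finset (Fin n)) (hs : ∀ m ∈ s, p.eval (w ^ (m : ℕ)) = 0) : s.card < r := by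
  classical
  have hinj : Function.Injective (fun m : Fin n => w ^ (m : ℕ)) := by
    intro i j hij
    exact Fin.ext (hw.pow_inj i.2 j.2 hij)
  have h1 : (s.image (fun m : Fin n => w ^ (m : ℕ))).card ≤ p.natDegree := by
    apply Polynomial.card_le_degree_of_subset_roots
    intro x hx
    rw [Finset.mem_val, Finset.mem_image] at hx
    obtain ⟨m, hm, rfl⟩ := hx
    rw [Polynomial.mem_roots hp]
    exact hs m hm
  rw [Finset.card_image_of_injective _ hinj] at h1
  have h2 : p.natDegree < r := (Polynomial.natDegree_lt_iff_degree_lt hp).2 hd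
  omega

theorem sum_pow {F : Type*} [Field F] {n : ℕ} {w : F}
    (hw : IsPrimitiveRoot w n) (e : ℕ) (h : ¬ n ∣ e) :
    ∑ m : Fin n, (w ^ (m : ℕ)) ^ e = 0 := by
  have h1 : w ^ e ≠ 1 := fun h' => h (hw.dvd_of_pow_eq_one e h')
  have h2 : ∑ m ∈ Finset.range n, (w ^ e) ^ m = 0 := by
    rw [geom_sum_eq h1, ← pow_mul, mul_comm, pow_mul, hw.pow_eq_one]
    simp
  rw [← h2, ← Fin.sum_univ_eq_sum_range]
  refine Finset.sum_congr rfl fun m _ => ?_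
  rw [← pow_mul, ← pow_mul, mul_comm]

theorem lcd_general {F : Type*} [Field F] (n r : ℕ) (w : F)
    (hw : IsPrimitiveRoot w n) (hodd : n % 2 = 1) (hF : (n : F) ≠ 0)
    (hr0 : 0 < r) (hrn : r < n) :
    ∃ C : Submodule F (Fin n → F),
      Module.finrank F C = r ∧ minDist C = n - r + 1 ∧ C ⊓ dualCode C = ⊥ := by
  classical
  obtain ⟨a, ha⟩ : ∃ a, n ∣ 2 * a + (r - 1) := by
    rcases Nat.even_or_odd' r with ⟨c, rfl | rfl⟩
    · refine ⟨(n + 1) / 2 - c, 1, by omega⟩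
    · refine ⟨n - c, 2, by omega⟩
  have hw0 : w ≠ 0 := hw.ne_zero (by omega)
  have hwt : ∀ p : Polynomial.degreeLT F r, p ≠ 0 → n - r + 1 ≤ hWeight (encMap n r a w p) := by
    intro p hp
    have h1 := zeros_card_s17 hw (p : Polynomial F) (by simpa using hp)
      (Polynomial.mem_degreeLT.1 p.2)
      (Finset.univ.filter fun m => ¬ (encMap n r a w p m ≠ 0)) (by
        intro m hm
        simpa [encMap, hw0] using hm)
    have h2 := Finset.card_filter_add_card_filter_not (s := (Finset.univ : Finset (Fin n)))
      (fun m => encMap n r a w p m ≠ 0)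
    rw [Finset.card_univ, Fintype.card_fin] at h2
    have h3 : hWeight (encMap n r a w p) =
      (Finset.univ.filter fun m => encMap n r a w p m ≠ 0).card := by
      unfold hWeight
      congr
    omega
  have hinj : Function.Injective (encMap n r a w) := by
    rw [injective_iff_map_eq_zero]
    intro p hp
    by_contra h
    have := hwt p h
    rw [hp] at this
    simp [hWeight] at this
  refine ⟨LinearMap.range (encMap n r a w), ?_, ?_, ?_⟩
  · rw [LinearMap.finrank_range_of_inj hinj, (Polynomial.degreeLTEquiv F r).finrank_eq]
    simp
  · let q : Polynomial F := ∏ i ∈ Finset.range (r - 1), (Polynomial.X - Polynomial.C (w ^ i))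
    have hqm : q.Monic := Polynomial.monic_prod_of_monic _ _ fun i _ => Polynomial.monic_X_sub_C _
    have hqd : q.natDegree = r - 1 := by
      simp only [q]
      rw [Polynomial.natDegree_prod_of_monic _ _ fun i _ => Polynomial.monic_X_sub_C _]
      simp only [Polynomial.natDegree_X_sub_C]
      simp
    have hq : q ∈ Polynomial.degreeLT F r := by
      rw [Polynomial.mem_degreeLT, ← Polynomial.natDegree_lt_iff_degree_lt hqm.ne_zero]
      omega
    have hq0 : (⟨q, hq⟩ : Polynomial.degreeLT F r) ≠ 0 := by
      intro h
      exact hqm.ne_zero (congrArg Subtype.val h)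
    have hle : hWeight (encMap n r a w ⟨q, hq⟩) ≤ n - r + 1 := by
      have : hWeight (encMap n r a w ⟨q, hq⟩) ≤ (Finset.Ico (r - 1) n).card := by
        unfold hWeight
        refine Finset.card_le_card_of_injOn (fun m => (m : ℕ)) ?_ ?_
        · intro m hm
          have hm' : encMap n r a w ⟨q, hq⟩ m ≠ 0 := by simpa using hm
          simp only [Finset.coe_Ico, Set.mem_Ico]
          refine ⟨?_, m.2⟩
          by_contra hlt
          apply hm'
          have : q.eval (w ^ (m : ℕ)) = 0 := by
            simp only [q]
            rw [Polynomial.eval_prod]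
            exact Finset.prod_eq_zero (i := (m : ℕ)) (by simp; omega) (by simp)
          simp [encMap, this]
        · intro i _ j _ h
          exact Fin.ext h
      rw [Nat.card_Ico] at this
      omega
    apply le_antisymm
    · refine le_trans (Nat.sInf_le ⟨_, ⟨⟨q, hq⟩, rfl⟩, ?_, rfl⟩) hle
      intro h
      exact hq0 (hinj (by rw [h, map_zero]))
    · refine le_csInf ⟨_, _, ⟨⟨q, hq⟩, rfl⟩, ?_, rfl⟩ ?_
      · intro h
        exact hq0 (hinj (by rw [h, map_zero]))
      · rintro d ⟨v, ⟨p, rfl⟩, hv, rfl⟩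
        exact hwt p (by rintro rfl; exact hv (map_zero _))
  · rw [eq_bot_iff]
    rintro v ⟨⟨p, rfl⟩, hv⟩
    have hc : ∀ i < r, (p : Polynomial F).coeff i = 0 := by
      intro i hi
      have hX : (Polynomial.X ^ (r - 1 - i) : Polynomial F) ∈ Polynomial.degreeLT F r := by
        rw [Polynomial.mem_degreeLT, Polynomial.degree_X_pow]
        exact_mod_cast (by omega : r - 1 - i < r)
      have h := hv _ ⟨⟨_, hX⟩, rfl⟩
      have hpd : (p : Polynomial F).natDegree < r := by
        by_cases h0 : (p : Polynomial F) = 0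
        · rw [h0]; simpa using hr0
        · exact (Polynomial.natDegree_lt_iff_degree_lt h0).2 (Polynomial.mem_degreeLT.1 p.2)
      have h2 : ∑ j ∈ Finset.range r, (p : Polynomial F).coeff j *
          ∑ m : Fin n, (w ^ (m : ℕ)) ^ (2 * a + (r - 1 - i) + j) = 0 := by
        rw [← h]
        simp_rw [Finset.mul_sum]
        rw [Finset.sum_comm]
        refine Finset.sum_congr rfl fun m _ => ?_
        simp only [encMap, LinearMap.coe_mk, AddHom.coe_mk]
        rw [Polynomial.eval_eq_sum_range' hpd, Finset.mul_sum, Finset.mul_sum]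
        refine Finset.sum_congr rfl fun j _ => ?_
        simp only [Polynomial.eval_pow, Polynomial.eval_X]
        ring
      rw [Finset.sum_eq_single i] at h2
      · have h3 : ∑ m : Fin n, (w ^ (m : ℕ)) ^ (2 * a + (r - 1 - i) + i) = n := by
          rw [show 2 * a + (r - 1 - i) + i = 2 * a + (r - 1) by omega]
          obtain ⟨t, ht⟩ := ha
          rw [ht]
          have : ∀ m : Fin n, (w ^ (m : ℕ)) ^ (n * t) = 1 := by
            intro m
            rw [← pow_mul, show (m : ℕ) * (n * t) = n * (m * t) by ring, pow_mul,
              hw.pow_eq_one, one_pow]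
          simp [this]
        rw [h3] at h2
        exact (mul_eq_zero.1 h2).resolve_right hF
      · intro j hj hji
        rw [Finset.mem_range] at hj
        rw [sum_pow hw, mul_zero]
        intro hd
        have h4 : (n : ℤ) ∣ (j : ℤ) - i := by
          have h5 := dvd_sub (Int.natCast_dvd_natCast.2 hd) (Int.natCast_dvd_natCast.2 ha)
          have h6 : ((2 * a + (r - 1 - i) + j : ℕ) : ℤ) - ((2 * a + (r - 1) : ℕ) : ℤ)
            = (j : ℤ) - i := by omega
          rwa [h6] at h5
        have h7 := Int.eq_zero_of_abs_lt_dvd h4 (by rw [abs_lt]; omega)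
        omega
      · intro h'
        simp [hi] at h'
    have hp0 : p = 0 := by
      apply Subtype.ext
      ext i
      by_cases hi : i < r
      · simpa using hc i hi
      · have := Polynomial.mem_degreeLT.1 p.2
        simpa using Polynomial.coeff_eq_zero_of_degree_lt
          (lt_of_lt_of_le this (by exact_mod_cast (not_lt.1 hi)))
    rw [hp0, map_zero]
    exact Submodule.zero_mem _

/-- For `k ≥ 2`, `n = 2^k − 1` and any `0 < r < n`, there exists an LCD
MDS `(n, r, n−r+1)` code over the finite field `GF(2^k)` of characteristic `2`. -/
theorem exists_LCD_MDS_code_char_two (k : ℕ) (hk : 2 ≤ k) (n r : ℕ) (hn : n = 2 ^ k - 1)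
    (hr0 : 0 < r) (hrn : r < n) :
    ∃ C : Submodule (GaloisField 2 k) (Fin n → GaloisField 2 k),
      Module.finrank (GaloisField 2 k) C = r ∧ minDist C = n - r + 1 ∧
        C ⊓ dualCode C = ⊥ := by
  classical
  have : Finite (GaloisField 2 k)ˣ := inferInstance
  obtain ⟨g, hg⟩ := IsCyclic.exists_generator (α := (GaloisField 2 k)ˣ)
  have ho : orderOf g = n := by
    rw [orderOf_eq_card_of_forall_mem_zpowers hg, Nat.card_units, GaloisField.card 2 k (by omega), hn]
  have h1 : IsPrimitiveRoot (g : GaloisField 2 k) n := by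
    rw [← ho]
    exact IsPrimitiveRoot.coe_units_iff.2 (IsPrimitiveRoot.orderOf g)
  have hodd : n % 2 = 1 := by
    obtain ⟨j, rfl⟩ : ∃ j, k = j + 1 := ⟨k - 1, by omega⟩
    have := Nat.two_pow_pos j
    rw [pow_succ] at hn
    omega
  refine lcd_general n r _ h1 hodd ?_ hr0 hrn
  rw [Ne, CharP.cast_eq_zero_iff (GaloisField 2 k) 2]
  omega
end

section
/- Let r, n be integers with 0 < r < n, n odd. Then for every odd integer i ≥ 1 there exist β ≥ 1 and a linear code C_i ⊆ GF(2^β)^{i·n} with dim C_i = i·r, minimum distance i·(n − r) + 1, and C_i ∩ C_i^⊥ = {0}. In particular each C_i is an LCD MDS code of rate exactly r/n, and the ratio of minimum distance to length equals 1 − r/n + 1/(i·n), which tends to 1 − r/n as i → ∞. -/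
open Polynomial in
noncomputable def evCode {F : Type*} [Field F] (N s : ℕ) (w : F) : F[X] →ₗ[F] (Fin N → F) where
  toFun p := fun m => (w ^ (m : ℕ)) ^ s * p.eval (w ^ (m : ℕ))
  map_add' := by intro p q; ext m; simp [mul_add]
  map_smul' := by intro c p; ext m; simp; ring

open Polynomial in
theorem evCode_weight {F : Type*} [Field F] {N s K : ℕ} {w : F} (hN : 0 < N)
    (hw : IsPrimitiveRoot w N) (p : F[X]) (hp : p ∈ degreeLT F K) (hp0 : p ≠ 0) :
    N + 1 ≤ hWeight (evCode N s w p) + K := by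
  classical
  have hw0 : w ≠ 0 := hw.ne_zero hN.ne'
  have hc := Finset.card_filter_add_card_filter_not (s := (Finset.univ : Finset (Fin N)))
    (fun m => evCode N s w p m ≠ 0)
  have h2 : (Finset.univ.filter fun m : Fin N => ¬ evCode N s w p m ≠ 0).card
      ≤ p.roots.toFinset.card := by
    apply Finset.card_le_card_of_injOn (fun m : Fin N => w ^ (m : ℕ))
    · intro m hm
      simp [evCode, hw0] at hm
      simp [hp0, hm]
    · intro a _ b _ hab
      exact Fin.ext (hw.pow_inj a.2 b.2 hab)
  have h3 : p.roots.toFinset.card ≤ p.natDegree :=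
    (Multiset.toFinset_card_le _).trans (card_roots' p)
  have h4 : p.natDegree < K := (natDegree_lt_iff_degree_lt hp0).2 (mem_degreeLT.1 hp)
  have h5 : hWeight (evCode N s w p)
      = (Finset.univ.filter fun m : Fin N => evCode N s w p m ≠ 0).card := by
    unfold hWeight; congr
  simp only [Finset.card_univ, Fintype.card_fin] at hc
  omega

open Polynomial in
theorem evCode_inj {F : Type*} [Field F] {N s K : ℕ} {w : F} (hN : 0 < N) (hK : K ≤ N)
    (hw : IsPrimitiveRoot w N) (p : F[X]) (hp : p ∈ degreeLT F K) (h : evCode N s w p = 0) :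
    p = 0 := by
  by_contra hp0
  have := evCode_weight (s := s) hN hw p hp hp0
  rw [h] at this
  simp [hWeight] at this
  omega

open Polynomial in
theorem evCode_main {F : Type*} [Field F] {N s K : ℕ} {w : F} (hN : 0 < N) (hK0 : 0 < K)
    (hK : K ≤ N) (hNF : (N : F) ≠ 0)
    (hw : IsPrimitiveRoot w N) (hs : N ∣ 2 * s + (K - 1)) :
    ∃ C : Submodule F (Fin N → F), Module.finrank F C = K ∧ minDist C = N - K + 1 ∧
      C ⊓ dualCode C = ⊥ := by
  have hw0 : w ≠ 0 := hw.ne_zero hN.ne'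
  refine ⟨(degreeLT F K).map (evCode N s w), ?_, ?_, ?_⟩
  · have h1 : Function.Injective ((evCode N s w).domRestrict (degreeLT F K)) := by
      rw [injective_iff_map_eq_zero]
      rintro ⟨p, hp⟩ h
      exact Subtype.ext (evCode_inj hN hK hw p hp h)
    have h2 := LinearMap.finrank_range_of_inj h1
    rw [LinearMap.range_domRestrict] at h2
    rw [h2, (degreeLTEquiv F K).finrank_eq]
    simp
  · apply le_antisymm
    · set q : F[X] := ∏ m ∈ Finset.range (K - 1), (X - C (w ^ m)) with hq
      have hq0 : q.Monic := monic_prod_of_monic _ _ (fun m _ => monic_X_sub_C _)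
      have hqd : q.natDegree = K - 1 := by
        rw [hq, natDegree_prod_of_monic _ _ (fun m _ => monic_X_sub_C _)]
        simp only [natDegree_X_sub_C]; simp
      have hqm : q ∈ degreeLT F K := by
        rw [mem_degreeLT, ← natDegree_lt_iff_degree_lt hq0.ne_zero]; omega
      have hle : hWeight (evCode N s w q) ≤ N - K + 1 := by
        classical
        have h5 : hWeight (evCode N s w q)
            = (Finset.univ.filter fun m : Fin N => evCode N s w q m ≠ 0).card := by
          unfold hWeight; congr
        have : (Finset.univ.filter fun m : Fin N => evCode N s w q m ≠ 0).card
            ≤ (Finset.Ico (K - 1) N).card := by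
          apply Finset.card_le_card_of_injOn (fun m : Fin N => (m : ℕ))
          · intro m hm
            simp only [Finset.coe_filter, Finset.mem_univ, true_and, Set.mem_setOf_eq] at hm
            simp only [Finset.coe_Ico, Set.mem_Ico, m.2, and_true]
            by_contra hlt
            apply hm
            have : q.eval (w ^ (m : ℕ)) = 0 := by
              rw [hq, eval_prod]
              exact Finset.prod_eq_zero (i := (m : ℕ)) (by simp; omega) (by simp)
            simp [evCode, this]
          · intro a _ b _ hab
            exact Fin.ext hab
        rw [Nat.card_Ico] at this
        omega
      refine le_trans (Nat.sInf_le ⟨evCode N s w q, ⟨q, hqm, rfl⟩, ?_, rfl⟩) hle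
      exact fun h => hq0.ne_zero (evCode_inj hN hK hw q hqm h)
    · unfold minDist
      apply le_csInf
      · refine ⟨_, evCode N s w 1, ⟨1, ?_, rfl⟩, ?_, rfl⟩
        · change (1 : F[X]) ∈ degreeLT F K
          rw [mem_degreeLT, degree_one]; exact_mod_cast hK0
        · intro h
          have := congrFun h ⟨0, hN⟩
          simp [evCode] at this
      · rintro d ⟨v, ⟨p, hp, rfl⟩, hv, rfl⟩
        have := evCode_weight (s := s) hN hw p hp (by rintro rfl; simp at hv)
        omega
  · rw [eq_bot_iff]
    rintro v ⟨⟨p, hp, rfl⟩, hd⟩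
    have hp' : p.degree < K := mem_degreeLT.1 hp
    have key : ∀ j < K, p.coeff j = 0 := by
      intro j hj
      have hX : (X ^ (K - 1 - j) : F[X]) ∈ degreeLT F K := by
        rw [mem_degreeLT, degree_X_pow]; exact_mod_cast (by omega : K - 1 - j < K)
      have h := hd (evCode N s w (X ^ (K - 1 - j))) ⟨_, hX, rfl⟩
      have hev : ∀ x : F, p.eval x = ∑ l ∈ Finset.range K, p.coeff l * x ^ l := by
        intro x
        by_cases hp0 : p = 0
        · simp [hp0]
        · exact eval_eq_sum_range' ((natDegree_lt_iff_degree_lt hp0).2 hp') x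
      have hterm : ∀ m : Fin N, evCode N s w (X ^ (K - 1 - j)) m * evCode N s w p m
          = ∑ l ∈ Finset.range K, p.coeff l * (w ^ l * (w ^ j)⁻¹) ^ (m : ℕ) := by
        intro m
        simp only [evCode, LinearMap.coe_mk, AddHom.coe_mk, hev, eval_pow, eval_X]
        have e : ((w ^ (m : ℕ)) ^ s) * (w ^ (m : ℕ)) ^ (K - 1 - j) * (w ^ (m : ℕ)) ^ s
            = ((w ^ j)⁻¹) ^ (m : ℕ) := by
          rw [inv_pow]
          apply eq_inv_of_mul_eq_one_left
          have : (w ^ (2 * s + (K - 1))) ^ (m : ℕ) = 1 := by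
            rw [(hw.pow_eq_one_iff_dvd _).2 hs, one_pow]
          rw [← this]
          simp only [← pow_mul, ← pow_add]
          congr 1
          obtain ⟨t, ht⟩ : ∃ t, K - 1 = j + t := ⟨K - 1 - j, by omega⟩
          rw [ht, Nat.add_sub_cancel_left]
          ring
        rw [← mul_assoc, e, Finset.mul_sum]
        refine Finset.sum_congr rfl fun l _ => ?_
        rw [mul_pow, ← pow_mul, ← pow_mul, mul_comm l]
        ring
      rw [Finset.sum_congr rfl (fun m _ => hterm m), Finset.sum_comm] at h
      have hsum : ∀ l ∈ Finset.range K,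
          ∑ m : Fin N, p.coeff l * (w ^ l * (w ^ j)⁻¹) ^ (m : ℕ)
            = if l = j then p.coeff j * N else 0 := by
        intro l hl
        rw [Finset.mem_range] at hl
        rw [← Finset.mul_sum, Fin.sum_univ_eq_sum_range (fun m => (w ^ l * (w ^ j)⁻¹) ^ m)]
        split_ifs with hlj
        · subst hlj
          simp [hw0]
        · have hne : w ^ l * (w ^ j)⁻¹ - 1 ≠ 0 := by
            intro h0
            apply hlj
            apply hw.pow_inj (by omega) (by omega)
            have := sub_eq_zero.1 h0
            field_simp at this
            exact this
          have hg := geom_sum_mul (w ^ l * (w ^ j)⁻¹) N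
          have h1 : (w ^ l * (w ^ j)⁻¹) ^ N = 1 := by
            rw [mul_pow, inv_pow, ← pow_mul, ← pow_mul, mul_comm l, mul_comm j, pow_mul, pow_mul,
              hw.pow_eq_one]
            simp
          rw [h1, sub_self] at hg
          rw [(mul_eq_zero.1 hg).resolve_right hne, mul_zero]
      rw [Finset.sum_congr rfl hsum] at h
      simp only [Finset.sum_ite_eq', Finset.mem_range, hj, if_true] at h
      exact (mul_eq_zero.1 h).resolve_right hNF
    have : p = 0 := by
      ext j
      by_cases hj : j < K
      · simpa using key j hj
      · rw [coeff_zero]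
        exact coeff_eq_zero_of_degree_lt (hp'.trans_le (by exact_mod_cast not_lt.1 hj))
    simp [this]

theorem exists_root (N : ℕ) (hN : Odd N) (hN0 : 1 < N) :
    ∃ β : ℕ, 1 ≤ β ∧ ∃ w : GaloisField 2 β, IsPrimitiveRoot w N := by
  have hpos : 0 < N.totient := Nat.totient_pos.2 (by omega)
  refine ⟨N.totient, hpos, ?_⟩
  set F := GaloisField 2 N.totient
  have hcard : Nat.card F = 2 ^ N.totient := GaloisField.card 2 _ hpos.ne'
  haveI : Finite F := Nat.finite_of_card_ne_zero (by rw [hcard]; positivity)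
  have hcu : Nat.card Fˣ = 2 ^ N.totient - 1 := by
    rw [Nat.card_units, hcard]
  have hdvd : N ∣ Nat.card Fˣ := by
    rw [hcu]
    exact (Nat.modEq_iff_dvd' Nat.one_le_two_pow).1
      (Nat.ModEq.pow_totient (Nat.coprime_two_left.2 hN)).symm
  obtain ⟨g, hg⟩ := IsCyclic.exists_ofOrder_eq_natCard (α := Fˣ)
  obtain ⟨t, ht⟩ := hdvd
  have hp : IsPrimitiveRoot g (Nat.card Fˣ) := hg ▸ IsPrimitiveRoot.orderOf g
  have h2 := hp.pow Nat.card_pos (ht.trans (mul_comm _ _))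
  exact ⟨((g ^ t : Fˣ) : F), IsPrimitiveRoot.coe_units_iff.2 h2⟩

/-- For `0 < r < n` with `n` odd: for every odd `i ≥ 1` there is an LCD
MDS code of length `i·n`, dimension `i·r` and minimum distance `i·(n−r) + 1` over some
field `GF(2^β)` of characteristic `2`; each such code has rate exactly `r/n` and ratio of
minimum distance to length `1 − r/n + 1/(i·n)`, which tends to `1 − r/n` as `i → ∞`. -/
theorem exists_asymptotic_LCD_MDS_family (n r : ℕ) (hr0 : 0 < r) (hrn : r < n)
    (hn : Odd n) :
    (∀ i : ℕ, Odd i →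
      (∃ β : ℕ, 1 ≤ β ∧
        ∃ C : Submodule (GaloisField 2 β) (Fin (i * n) → GaloisField 2 β),
          Module.finrank (GaloisField 2 β) C = i * r ∧
          minDist C = i * (n - r) + 1 ∧ C ⊓ dualCode C = ⊥) ∧
      ((i * r : ℚ) / (i * n : ℚ) = (r : ℚ) / (n : ℚ)) ∧
      ((i * (n - r) + 1 : ℚ) / (i * n : ℚ) =
        1 - (r : ℚ) / (n : ℚ) + 1 / (i * n : ℚ))) ∧
    Filter.Tendsto (fun i : ℕ => ((i * (n - r) + 1 : ℚ) / (i * n : ℚ)))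
      Filter.atTop (nhds (1 - (r : ℚ) / (n : ℚ))) := by
  have hn0 : (n : ℚ) ≠ 0 := by exact_mod_cast (by omega : n ≠ 0)
  have hid : ∀ i : ℕ, i ≠ 0 → ((i * (n - r) + 1 : ℚ) / (i * n : ℚ) =
        1 - (r : ℚ) / (n : ℚ) + 1 / (i * n : ℚ)) := by
    intro i hi
    have hi0 : (i : ℚ) ≠ 0 := by exact_mod_cast hi
    field_simp
  refine ⟨fun i hi => ⟨?_, ?_, hid i hi.pos.ne'⟩, ?_⟩
  · have hN : Odd (i * n) := hi.mul hn
    have hi0 := hi.pos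
    have h1 : 1 < i * n := by nlinarith
    have hK0 : 0 < i * r := by positivity
    have hK : i * r ≤ i * n := Nat.mul_le_mul_left _ hrn.le
    obtain ⟨β, hβ, w, hw⟩ := exists_root (i * n) hN h1
    refine ⟨β, hβ, ?_⟩
    rw [Nat.mul_sub]
    obtain ⟨s, hs⟩ : ∃ s, i * n ∣ 2 * s + (i * r - 1) := by
      obtain ⟨a, ha⟩ := hN
      rcases Nat.even_or_odd' (i * r) with ⟨b, hb | hb⟩
      · exact ⟨a - b + 1, 1, by omega⟩
      · exact ⟨i * n - b, 2, by omega⟩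
    refine evCode_main (by omega) hK0 hK ?_ hw hs
    obtain ⟨a, ha⟩ := hN
    rw [ha]
    have : (2 : GaloisField 2 β) = 0 := by
      exact_mod_cast CharP.cast_eq_zero (GaloisField 2 β) 2
    push_cast
    rw [this]
    simp
  · have hi0 : (i : ℚ) ≠ 0 := by exact_mod_cast hi.pos.ne'
    exact mul_div_mul_left _ _ hi0
  · have h0 : Filter.Tendsto (fun i : ℕ => 1 - (r : ℚ) / (n : ℚ) + 1 / (i * n : ℚ))
        Filter.atTop (nhds (1 - (r : ℚ) / (n : ℚ) + 0)) := by
      apply Filter.Tendsto.const_add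
      have h1 : Filter.Tendsto (fun i : ℕ => ((i : ℚ))⁻¹ * (n : ℚ)⁻¹)
          Filter.atTop (nhds (0 * (n : ℚ)⁻¹)) := by
        apply Filter.Tendsto.mul_const
        exact tendsto_inv_atTop_zero.comp tendsto_natCast_atTop_atTop
      rw [zero_mul] at h1
      refine h1.congr fun i => ?_
      rw [one_div, mul_inv]
    rw [add_zero] at h0
    refine h0.congr' ?_
    filter_upwards [Filter.eventually_ne_atTop 0] with i hi
    exact (hid i hi).symm
end
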